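/- arXiv:1505.02003 — 2 statements merged into one kernel-verified Lean document; each statement's English description precedes it below -/
import Mathlib

section
/- Let b ≥ 2 be an integer, s ∈ ℕ, and let a = (a_j)_{j≥1} be a nondecreasing sequence of real weights. Then there exist positive constants c_{1,s}, c_{2,s}, c_{3,s}, c_{4,s}, which may depend on s and a but not on n, such that for all n ∈ ℕ one has exp(−(log n)²/(2 s log b) − c_{1,s}·log n − c_{2,s}) ≤ e(n, s, W_{s,a}) ≤ c_{3,s}·exp(−c_{4,s}·(log n)²). In particular e(n, s, W_{s,a}) is of order exp(Θ(−(log n)²)). -/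
open MeasureTheory Matrix Filter
open scoped ENNReal BigOperators Topology

noncomputable section

/-- The `b`-adic digit of `k : ℕ` at place `b^i` (i.e. the `(i+1)`-st digit). -/
def natDigit (b k i : ℕ) : ℕ := k / b ^ i % b

/-- The `(i+1)`-st `b`-adic digit of a real number `x ∈ [0,1)`
(using the expansion in which infinitely many digits differ from `b-1`). -/
def realDigit (b : ℕ) (x : ℝ) (i : ℕ) : ℕ := (⌊x * (b : ℝ) ^ (i + 1)⌋ % (b : ℤ)).toNat

/-- The `k`-th one-dimensional `b`-adic Walsh function. -/
def wal1 (b k : ℕ) (x : ℝ) : ℂ :=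
  Complex.exp (2 * Real.pi * Complex.I / (b : ℂ) *
    ((∑ i ∈ Finset.range k, natDigit b k i * realDigit b x i : ℕ) : ℂ))

/-- The `k`-th `s`-dimensional `b`-adic Walsh function. -/
def wal (b : ℕ) {s : ℕ} (k : Fin s → ℕ) (x : Fin s → ℝ) : ℂ :=
  ∏ j, wal1 b (k j) (x j)

/-- The unit cube `[0,1)^s`. -/
def unitCube (s : ℕ) : Set (Fin s → ℝ) := Set.univ.pi fun _ => Set.Ico (0 : ℝ) 1

/-- The `k`-th Walsh coefficient of `f`. -/
def walshCoeff (b : ℕ) {s : ℕ} (f : (Fin s → ℝ) → ℝ) (k : Fin s → ℕ) : ℂ :=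
  ∫ x in unitCube s, (f x : ℂ) * (starRingEnd ℂ) (wal b k x)

/-- The generalized Dick weight `μ_a(k)`, one-dimensional case. -/
def dickWt (b : ℕ) (a : ℝ) (k : ℕ) : ℝ :=
  ∑ i ∈ Finset.range k, if natDigit b k i ≠ 0 then ((i : ℝ) + 1 + a) else 0

/-- The generalized Dick weight `μ_a(k)` for vectors. -/
def dickWtV (b : ℕ) {s : ℕ} (a : Fin s → ℝ) (k : Fin s → ℕ) : ℝ :=
  ∑ j, dickWt b (a j) (k j)

/-- The modified Dick weight `μ'_a(k)`, one-dimensional case. -/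
def mdickWt (b : ℕ) (a : ℝ) (k : ℕ) : ℝ :=
  ∑ i ∈ Finset.range k, if natDigit b k i ≠ 0 then max ((i : ℝ) + 1 + a) 1 else 0

/-- The modified Dick weight `μ'_a(k)` for vectors. -/
def mdickWtV (b : ℕ) {s : ℕ} (a : Fin s → ℝ) (k : Fin s → ℕ) : ℝ :=
  ∑ j, mdickWt b (a j) (k j)

/-- Digitwise subtraction modulo `b` of natural numbers. -/
def dsub (b k k' : ℕ) : ℕ :=
  ∑ i ∈ Finset.range (k + k' + 1), ((natDigit b k i + (b - natDigit b k' i)) % b) * b ^ i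

/-- The integral of `f` over the unit cube. -/
def intBox (s : ℕ) (f : (Fin s → ℝ) → ℝ) : ℝ := ∫ x in unitCube s, f x

/-- Membership in the Walsh space `W_{s,a}`: `f` equals its (convergent) Walsh series
and has finite norm. -/
def MemW (b : ℕ) {s : ℕ} (a : Fin s → ℝ) (f : (Fin s → ℝ) → ℝ) : Prop :=
  (∀ x ∈ unitCube s, HasSum (fun k : Fin s → ℕ => walshCoeff b f k * wal b k x) ((f x : ℂ))) ∧
  BddAbove (Set.range fun k : Fin s → ℕ => ‖walshCoeff b f k‖ * (b : ℝ) ^ dickWtV b a k)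

/-- The norm of the Walsh space `W_{s,a}`. -/
def normW (b : ℕ) {s : ℕ} (a : Fin s → ℝ) (f : (Fin s → ℝ) → ℝ) : ℝ :=
  ⨆ k : Fin s → ℕ, ‖walshCoeff b f k‖ * (b : ℝ) ^ dickWtV b a k

/-- Membership in the modified Walsh space `W'_{s,a}`. -/
def MemW' (b : ℕ) {s : ℕ} (a : Fin s → ℝ) (f : (Fin s → ℝ) → ℝ) : Prop :=
  (∀ x ∈ unitCube s, HasSum (fun k : Fin s → ℕ => walshCoeff b f k * wal b k x) ((f x : ℂ))) ∧
  BddAbove (Set.range fun k : Fin s → ℕ => ‖walshCoeff b f k‖ * (b : ℝ) ^ mdickWtV b a k)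

/-- The norm of the modified Walsh space `W'_{s,a}`. -/
def normW' (b : ℕ) {s : ℕ} (a : Fin s → ℝ) (f : (Fin s → ℝ) → ℝ) : ℝ :=
  ⨆ k : Fin s → ℕ, ‖walshCoeff b f k‖ * (b : ℝ) ^ mdickWtV b a k

/-- The worst-case error of the algorithm `A` over the unit ball of `(H, N)`. -/
def worstErr (s : ℕ) (H : Set ((Fin s → ℝ) → ℝ)) (N : ((Fin s → ℝ) → ℝ) → ℝ)
    (A : ((Fin s → ℝ) → ℝ) → ℝ) : ℝ≥0∞ :=
  ⨆ (f : (Fin s → ℝ) → ℝ) (_ : f ∈ H) (_ : N f ≤ 1), ENNReal.ofReal |intBox s f - A f|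

/-- The `n`-th minimal worst-case error over all algorithms using `n` function values
at points of the unit cube. -/
def minErr (n s : ℕ) (H : Set ((Fin s → ℝ) → ℝ)) (N : ((Fin s → ℝ) → ℝ) → ℝ) : ℝ≥0∞ :=
  ⨅ (t : Fin n → Fin s → ℝ) (_ : ∀ i, t i ∈ unitCube s) (φ : (Fin n → ℝ) → ℝ),
    worstErr s H N fun f => φ fun i => f (t i)

/-- Partial derivative in the `j`-th coordinate. -/
def pd {s : ℕ} (j : Fin s) (f : (Fin s → ℝ) → ℝ) : (Fin s → ℝ) → ℝ :=
  fun x => deriv (fun t => f (Function.update x j t)) (x j)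

/-- The mixed partial derivative `f^{(α)}`. -/
def mpd {s : ℕ} (α : Fin s → ℕ) (f : (Fin s → ℝ) → ℝ) : (Fin s → ℝ) → ℝ :=
  (List.finRange s).foldr (fun j g => (pd j)^[α j] g) f

/-- Membership in the space `S_{s,u}` of smooth functions. -/
def MemS {s : ℕ} (u : Fin s → ℝ) (f : (Fin s → ℝ) → ℝ) : Prop :=
  ContDiff ℝ (⊤ : ℕ∞) f ∧
  BddAbove (Set.range fun α : Fin s → ℕ =>
    (∫ x in unitCube s, |mpd α f x|) / ∏ j, u j ^ α j)

/-- The norm of the space `S_{s,u}`. -/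
def normS {s : ℕ} (u : Fin s → ℝ) (f : (Fin s → ℝ) → ℝ) : ℝ :=
  ⨆ α : Fin s → ℕ, (∫ x in unitCube s, |mpd α f x|) / ∏ j, u j ^ α j

/-- The column vector of the first `m` `b`-adic digits of `k`. -/
def trunc (b m k : ℕ) : Fin m → ZMod b := fun i => (natDigit b k (i : ℕ) : ZMod b)

/-- The `m`-th point of the digital net determined by generating matrices `G`. -/
def netPoint (b : ℕ) {s l d : ℕ} (G : Fin s → Matrix (Fin l) (Fin d) (ZMod b)) (m : ℕ) :
    Fin s → ℝ :=
  fun j => ∑ i : Fin l, (((G j).mulVec (trunc b d m)) i).val / (b : ℝ) ^ ((i : ℕ) + 1)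

/-- The dual net of the digital net determined by `G`. -/
def dualNet (b : ℕ) {s l d : ℕ} (G : Fin s → Matrix (Fin l) (Fin d) (ZMod b)) :
    Set (Fin s → ℕ) :=
  {k | ∑ j, (G j)ᵀ.mulVec (trunc b l (k j)) = 0}

/-- The QMC algorithm given by the digital net with generating matrices `G`. -/
def qmcNet (b : ℕ) {s l d : ℕ} (G : Fin s → Matrix (Fin l) (Fin d) (ZMod b))
    (f : (Fin s → ℝ) → ℝ) : ℝ :=
  ((b : ℝ) ^ d)⁻¹ * ∑ m ∈ Finset.range (b ^ d), f (netPoint b G m)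

/-- `n_j = #{i ∈ ℕ : i + a ≤ 1}` (with `i` ranging over positive integers). -/
def negCount (a : ℝ) : ℕ := Set.ncard {i : ℕ | 0 < i ∧ (i : ℝ) + a ≤ 1}


/-! ### digits -/

def om (b : ℕ) : ℂ := Complex.exp (2 * Real.pi * Complex.I / (b : ℂ))

lemma om_prim {b : ℕ} (hb : 2 ≤ b) : IsPrimitiveRoot (om b) b :=
  Complex.isPrimitiveRoot_exp b (by omega)

lemma om_norm {b : ℕ} (hb : 2 ≤ b) : ‖om b‖ = 1 :=
  (om_prim hb).norm'_eq_one (by omega)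

lemma om_conj {b : ℕ} (hb : 2 ≤ b) : om b * (starRingEnd ℂ) (om b) = 1 := by
  rw [Complex.mul_conj, Complex.normSq_eq_norm_sq, om_norm hb]; simp

lemma natDigit_lt {b : ℕ} (hb : 2 ≤ b) (k i : ℕ) : natDigit b k i < b :=
  Nat.mod_lt _ (by omega)

lemma realDigit_lt {b : ℕ} (hb : 2 ≤ b) (x : ℝ) (i : ℕ) : realDigit b x i < b := by
  unfold realDigit
  have h1 := Int.emod_lt_of_pos (⌊x * (b : ℝ) ^ (i + 1)⌋) (b := (b : ℤ)) (by omega)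
  have h2 := Int.emod_nonneg (⌊x * (b : ℝ) ^ (i + 1)⌋) (b := (b : ℤ)) (by omega)
  omega

lemma natDigit_zero_of_lt {b k i : ℕ} (h : k < b ^ i) : natDigit b k i = 0 := by
  unfold natDigit; rw [Nat.div_eq_of_lt h]; simp

lemma sum_range_digit {b : ℕ} (hb : 2 ≤ b) {R : Type*} [AddCommMonoid R] (k M : ℕ) (hk : k < b ^ M)
    (g : ℕ → R) (hg : ∀ i, natDigit b k i = 0 → g i = 0) :
    ∑ i ∈ Finset.range k, g i = ∑ i ∈ Finset.range M, g i := by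
  rcases le_total k M with h | h
  · apply Finset.sum_subset (Finset.range_mono h)
    intro i _ hi
    apply hg; apply natDigit_zero_of_lt
    simp at hi
    exact lt_of_lt_of_le (Nat.lt_pow_self (by omega : 1 < b)) (Nat.pow_le_pow_right (by omega) hi)
  · symm
    apply Finset.sum_subset (Finset.range_mono h)
    intro i _ hi
    apply hg; apply natDigit_zero_of_lt
    simp at hi
    exact lt_of_lt_of_le hk (Nat.pow_le_pow_right (by omega) hi)

lemma wal1_eq {b : ℕ} (hb : 2 ≤ b) (k M : ℕ) (hk : k < b ^ M) (x : ℝ) :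
    wal1 b k x = ∏ i ∈ Finset.range M, om b ^ (natDigit b k i * realDigit b x i) := by
  unfold wal1
  rw [sum_range_digit hb k M hk _ (by intro i hi; rw [hi, zero_mul])]
  rw [Finset.prod_pow_eq_pow_sum, om, ← Complex.exp_nat_mul, mul_comm]

lemma wal1_zero (b : ℕ) (x : ℝ) : wal1 b 0 x = 1 := by simp [wal1]

lemma dickWt_eq {b : ℕ} (hb : 2 ≤ b) (a : ℝ) (k M : ℕ) (hk : k < b ^ M) :
    dickWt b a k = ∑ i ∈ Finset.range M, if natDigit b k i ≠ 0 then ((i : ℝ) + 1 + a) else 0 := by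
  unfold dickWt
  exact sum_range_digit hb k M hk _ (by intro i hi; simp [hi])

lemma sum_range_mul' {R : Type*} [AddCommMonoid R] (m n : ℕ) (f : ℕ → R) :
    ∑ k ∈ Finset.range (n * m), f k
      = ∑ d ∈ Finset.range m, ∑ j ∈ Finset.range n, f (j + n * d) := by
  induction m with
  | zero => simp
  | succ m ih =>
    rw [mul_add, mul_one, Finset.sum_range_add, ih, Finset.sum_range_succ]
    simp [add_comm]

lemma digit_prod_sum {b : ℕ} (hb : 2 ≤ b) {R : Type*} [CommSemiring R] (M : ℕ) (u : ℕ → ℕ → R) :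
    ∑ k ∈ Finset.range (b ^ M), ∏ i ∈ Finset.range M, u i (natDigit b k i)
      = ∏ i ∈ Finset.range M, ∑ d ∈ Finset.range b, u i d := by
  induction M with
  | zero => simp
  | succ M ih =>
    have hpos : 0 < b ^ M := pow_pos (by omega) _
    rw [pow_succ, sum_range_mul', Finset.prod_range_succ, ← ih, Finset.mul_sum]
    refine Finset.sum_congr rfl fun d hd => ?_
    rw [Finset.sum_mul]
    refine Finset.sum_congr rfl fun j hj => ?_
    rw [Finset.mem_range] at hd hj
    rw [Finset.prod_range_succ]
    congr 1
    · refine Finset.prod_congr rfl fun i hi => ?_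
      rw [Finset.mem_range] at hi
      congr 1
      unfold natDigit
      obtain ⟨c, rfl⟩ := Nat.exists_eq_add_of_lt hi
      have : j + b ^ (i + c + 1) * d = j + b ^ i * (b * (b ^ c * d)) := by ring
      rw [this, Nat.add_mul_div_left _ _ (pow_pos (by omega) _), Nat.add_mul_mod_self_left]
    · congr 1
      unfold natDigit
      rw [Nat.add_mul_div_left _ _ hpos, Nat.div_eq_of_lt hj, zero_add, Nat.mod_eq_of_lt hd]

lemma digit_ext {b : ℕ} (hb : 2 ≤ b) (M : ℕ) : ∀ k l : ℕ, k < b ^ M → l < b ^ M →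
    (∀ i < M, natDigit b k i = natDigit b l i) → k = l := by
  induction M with
  | zero => intro k l hk hl _; simp at hk hl; omega
  | succ M ih =>
    intro k l hk hl h
    have h0 := h 0 (by omega)
    simp [natDigit] at h0
    have : k / b = l / b := by
      apply ih
      · rw [Nat.div_lt_iff_lt_mul (by omega)]; rwa [pow_succ] at hk
      · rw [Nat.div_lt_iff_lt_mul (by omega)]; rwa [pow_succ] at hl
      · intro i hi
        have := h (i + 1) (by omega)
        unfold natDigit at this ⊢
        rw [pow_succ'] at this
        rwa [Nat.div_div_eq_div_mul, Nat.div_div_eq_div_mul]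
    rw [← Nat.div_add_mod k b, ← Nat.div_add_mod l b, this, h0]

/-! ### orthogonality -/

lemma realDigit_add_nat {b : ℕ} (x y : ℝ) (i : ℕ) (c : ℕ)
    (hy : y * (b : ℝ) ^ (i + 1) = (b : ℝ) * c) : realDigit b (x + y) i = realDigit b x i := by
  unfold realDigit
  have : (x + y) * (b : ℝ) ^ (i + 1) = x * (b : ℝ) ^ (i + 1) + ((b * c : ℕ) : ℝ) := by
    rw [add_mul, hy]; push_cast; ring
  rw [this, Int.floor_add_natCast]
  push_cast
  rw [Int.add_mul_emod_self_left]

lemma realDigit_succ {b : ℕ} (hb : 2 ≤ b) (x y : ℝ) (i : ℕ) (hy : y * (b : ℝ) ^ (i + 1) = 1) :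
    realDigit b (x + y) i ≡ realDigit b x i + 1 [MOD b] := by
  unfold realDigit
  have : (x + y) * (b : ℝ) ^ (i + 1) = x * (b : ℝ) ^ (i + 1) + 1 := by
    rw [add_mul, hy]
  rw [this, Int.floor_add_one]
  rw [← Int.natCast_modEq_iff]
  push_cast
  rw [Int.toNat_of_nonneg (Int.emod_nonneg _ (by omega)),
    Int.toNat_of_nonneg (Int.emod_nonneg _ (by omega))]
  unfold Int.ModEq
  simp

lemma om_pow_modEq {b : ℕ} (hb : 2 ≤ b) {m n : ℕ} (h : m ≡ n [MOD b]) : om b ^ m = om b ^ n :=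
  pow_eq_pow_of_modEq h (om_prim hb).pow_eq_one

lemma wal1_norm {b : ℕ} (hb : 2 ≤ b) (k : ℕ) (x : ℝ) : ‖wal1 b k x‖ = 1 := by
  rw [wal1_eq hb k k (Nat.lt_pow_self (by omega)) x]
  simp [norm_prod, om_norm hb]

lemma wal1_mul_conj {b : ℕ} (hb : 2 ≤ b) (k : ℕ) (x : ℝ) :
    wal1 b k x * (starRingEnd ℂ) (wal1 b k x) = 1 := by
  rw [Complex.mul_conj, Complex.normSq_eq_norm_sq, wal1_norm hb]; simp

lemma integral_wal1 {b : ℕ} (hb : 2 ≤ b) (k l : ℕ) :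
    ∫ x in Set.Ico (0 : ℝ) 1, wal1 b k x * (starRingEnd ℂ) (wal1 b l x)
      = if k = l then 1 else 0 := by
  split_ifs with hkl
  · subst hkl
    simp_rw [wal1_mul_conj hb]
    simp
  have hb0 : (b : ℝ) ≠ 0 := by positivity
  set M := k + l with hM
  have hk : k < b ^ M := lt_of_lt_of_le (Nat.lt_pow_self (by omega : 1 < b))
    (Nat.pow_le_pow_right (by omega) (by omega))
  have hl : l < b ^ M := lt_of_lt_of_le (Nat.lt_pow_self (by omega : 1 < b))
    (Nat.pow_le_pow_right (by omega) (by omega))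
  set G : ℝ → ℂ := fun x => wal1 b k x * (starRingEnd ℂ) (wal1 b l x) with hG
  have hGe : ∀ x, G x = ∏ i ∈ Finset.range M, (om b ^ (natDigit b k i * realDigit b x i) *
      (starRingEnd ℂ) (om b ^ (natDigit b l i * realDigit b x i))) := by
    intro x
    rw [hG]; simp only
    rw [wal1_eq hb k M hk, wal1_eq hb l M hl, map_prod, Finset.prod_mul_distrib]
  have hex : ∃ i, i < M ∧ natDigit b k i ≠ natDigit b l i := by
    by_contra! h
    exact hkl (digit_ext hb M k l hk hl h)
  classical
  set i0 := Nat.find hex with hi0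
  obtain ⟨hi0M, hi0ne⟩ := Nat.find_spec hex
  rw [← hi0] at hi0M hi0ne
  have hlow : ∀ i < i0, natDigit b k i = natDigit b l i := by
    intro i hi
    have := Nat.find_min hex hi
    by_contra hne
    exact this ⟨by omega, hne⟩
  set h : ℝ := ((b : ℝ) ^ (i0 + 1))⁻¹ with hh
  set c : ℂ := om b ^ (natDigit b k i0) * (starRingEnd ℂ) (om b ^ (natDigit b l i0)) with hc
  have hc1 : c ≠ 1 := by
    intro hc1
    apply hi0ne
    apply (om_prim hb).pow_inj (natDigit_lt hb _ _) (natDigit_lt hb _ _)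
    have h1 : (starRingEnd ℂ) (om b ^ (natDigit b l i0)) * om b ^ (natDigit b l i0) = 1 := by
      rw [map_pow, ← mul_pow, mul_comm, om_conj hb, one_pow]
    calc om b ^ (natDigit b k i0)
        = c * om b ^ (natDigit b l i0) := by rw [hc, mul_assoc, h1, mul_one]
      _ = _ := by rw [hc1, one_mul]
  have hshift : ∀ x, G (x + h) = c * G x := by
    intro x
    rw [hGe, hGe]
    rw [← Finset.mul_prod_erase _ _ (Finset.mem_range.2 hi0M),
      ← Finset.mul_prod_erase (Finset.range M) _ (Finset.mem_range.2 hi0M), ← mul_assoc]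
    congr 1
    · have hd := realDigit_succ hb x h i0 (by rw [hh]; field_simp)
      rw [om_pow_modEq hb (hd.mul_left (natDigit b k i0)),
        om_pow_modEq hb (hd.mul_left (natDigit b l i0)), hc]
      simp only [mul_add, mul_one, pow_add, map_mul]
      ring
    · refine Finset.prod_congr rfl fun i hi => ?_
      have hne := Finset.ne_of_mem_erase hi
      rcases lt_or_gt_of_ne hne with hlt | hgt
      · rw [hlow i hlt]
        rw [map_pow, map_pow, ← mul_pow, ← mul_pow, om_conj hb, one_pow, one_pow]
      · obtain ⟨e, rfl⟩ := Nat.exists_eq_add_of_lt hgt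
        rw [realDigit_add_nat x h _ (b ^ e)]
        rw [hh]; push_cast; field_simp; ring
  have hper : Function.Periodic G 1 := by
    intro x
    rw [hGe, hGe]
    refine Finset.prod_congr rfl fun i hi => ?_
    rw [realDigit_add_nat x 1 _ (b ^ i)]
    push_cast; ring
  have hint : ∫ x in Set.Ico (0 : ℝ) 1, G x = ∫ x in (0 : ℝ)..1, G x := by
    rw [intervalIntegral.integral_of_le zero_le_one, integral_Ico_eq_integral_Ioc]
  change ∫ x in Set.Ico (0 : ℝ) 1, G x = 0
  rw [hint]
  have e1 : ∫ x in (0 : ℝ)..1, G (x + h) = ∫ x in (0 : ℝ)..1, G x := by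
    rw [intervalIntegral.integral_comp_add_right]
    have := hper.intervalIntegral_add_eq h 0
    rw [zero_add] at this ⊢
    rw [add_comm 1 h, this]
  simp_rw [hshift] at e1
  rw [intervalIntegral.integral_const_mul] at e1
  have : (c - 1) * ∫ x in (0 : ℝ)..1, G x = 0 := by rw [sub_mul, e1]; ring
  exact (mul_eq_zero.1 this).resolve_left (sub_ne_zero.2 hc1)

lemma integral_wal {b : ℕ} (hb : 2 ≤ b) {s : ℕ} (k l : Fin s → ℕ) :
    ∫ x in unitCube s, wal b k x * (starRingEnd ℂ) (wal b l x) = if k = l then 1 else 0 := by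
  unfold unitCube wal
  rw [volume_pi, Measure.restrict_pi_pi]
  simp_rw [map_prod, ← Finset.prod_mul_distrib]
  rw [integral_fintype_prod_eq_prod (fun j x => wal1 b (k j) x * (starRingEnd ℂ) (wal1 b (l j) x))]
  simp_rw [integral_wal1 hb]
  split_ifs with h
  · subst h; simp
  · obtain ⟨j, hj⟩ := Function.ne_iff.1 h
    exact Finset.prod_eq_zero (Finset.mem_univ j) (by simp [hj])

lemma measurable_realDigit (b : ℕ) (i : ℕ) : Measurable fun x => realDigit b x i := by
  unfold realDigit
  have h1 : Measurable fun x : ℝ => ⌊x * (b : ℝ) ^ (i + 1)⌋ :=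
    Int.measurable_floor.comp (measurable_id.mul_const _)
  exact (measurable_from_top (f := fun z : ℤ => (z % (b : ℤ)).toNat)).comp h1

lemma measurable_wal1 (b k : ℕ) : Measurable (wal1 b k) := by
  unfold wal1
  have h1 : Measurable fun x : ℝ => (∑ i ∈ Finset.range k, natDigit b k i * realDigit b x i : ℕ) :=
    Finset.measurable_sum _ fun i _ => (measurable_realDigit b i).const_mul _
  exact (measurable_from_top (f := fun z : ℕ => Complex.exp (2 * Real.pi * Complex.I / (b : ℂ) *
    (z : ℂ)))).comp h1

lemma measurable_wal (b : ℕ) {s : ℕ} (k : Fin s → ℕ) : Measurable (wal b k) := by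
  unfold wal
  exact Finset.measurable_prod _ fun j _ => (measurable_wal1 b (k j)).comp (measurable_pi_apply j)

lemma wal_norm {b : ℕ} (hb : 2 ≤ b) {s : ℕ} (k : Fin s → ℕ) (x : Fin s → ℝ) : ‖wal b k x‖ = 1 := by
  unfold wal; simp [norm_prod, wal1_norm hb]

lemma wal_zero (b : ℕ) {s : ℕ} (x : Fin s → ℝ) : wal b 0 x = 1 := by
  unfold wal; simp [wal1_zero]

lemma wal_mem_roots {b : ℕ} (hb : 2 ≤ b) {s : ℕ} (k : Fin s → ℕ) (x : Fin s → ℝ) :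
    wal b k x ^ b = 1 := by
  unfold wal
  rw [← Finset.prod_pow]
  refine Finset.prod_eq_one fun j _ => ?_
  rw [wal1_eq hb (k j) (k j) (Nat.lt_pow_self (by omega)), ← Finset.prod_pow]
  refine Finset.prod_eq_one fun i _ => ?_
  rw [← pow_mul, mul_comm, pow_mul, (om_prim hb).pow_eq_one, one_pow]

instance probCube (s : ℕ) : IsProbabilityMeasure ((volume : Measure (Fin s → ℝ)).restrict (unitCube s)) := by
  constructor
  rw [Measure.restrict_apply_univ, unitCube, volume_pi, Measure.pi_pi]
  simp

lemma measurableSet_cube (s : ℕ) : MeasurableSet (unitCube s) :=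
  MeasurableSet.univ_pi fun _ => measurableSet_Ico

lemma intBox_eq (b : ℕ) {s : ℕ} (f : (Fin s → ℝ) → ℝ) : (intBox s f : ℂ) = walshCoeff b f 0 := by
  unfold intBox walshCoeff
  simp_rw [wal_zero]
  simp only [map_one, mul_one]
  exact integral_ofReal.symm

/-! ### lower bound -/

def cc (b m : ℕ) (h : ℕ → ℕ) (k : ℕ) : ℂ :=
  ∏ i ∈ Finset.range m, (starRingEnd ℂ) (om b ^ (natDigit b k i * h i))

lemma cc_norm {b : ℕ} (hb : 2 ≤ b) (m : ℕ) (h : ℕ → ℕ) (k : ℕ) : ‖cc b m h k‖ = 1 := by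
  unfold cc; simp [norm_prod, om_norm hb]

lemma cc_zero (b m : ℕ) (h : ℕ → ℕ) : cc b m h 0 = 1 := by
  unfold cc; simp [natDigit]

lemma char_sum {b : ℕ} (hb : 2 ≤ b) (x h : ℕ) (hx : x < b) (hh : h < b) :
    ∑ d ∈ Finset.range b, (starRingEnd ℂ) (om b ^ (d * h)) * om b ^ (d * x)
      = if x = h then (b : ℂ) else 0 := by
  set z : ℂ := (starRingEnd ℂ) (om b ^ h) * om b ^ x with hz
  have h1 : om b ^ h * (starRingEnd ℂ) (om b ^ h) = 1 := by
    rw [map_pow, ← mul_pow, om_conj hb, one_pow]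
  have e : ∀ d, (starRingEnd ℂ) (om b ^ (d * h)) * om b ^ (d * x) = z ^ d := by
    intro d
    rw [hz, mul_pow, ← map_pow, ← pow_mul, ← pow_mul, mul_comm h, mul_comm x]
  simp_rw [e]
  split_ifs with hxh
  · have : z = 1 := by rw [hz, hxh, mul_comm, h1]
    simp [this]
  · have hz1 : z ≠ 1 := by
      intro hz1
      apply hxh
      apply (om_prim hb).pow_inj hx hh
      calc om b ^ x = om b ^ h * z := by rw [hz, ← mul_assoc, h1, one_mul]
        _ = _ := by rw [hz1, mul_one]
    have hzb : z ^ b = 1 := by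
      rw [hz, mul_pow, ← map_pow, ← pow_mul, ← pow_mul, mul_comm h, mul_comm x, pow_mul, pow_mul,
        (om_prim hb).pow_eq_one]
      simp
    have := geom_sum_mul z b
    rw [hzb, sub_self] at this
    exact (mul_eq_zero.1 this).resolve_right (sub_ne_zero.2 hz1)

lemma kernel1 {b : ℕ} (hb : 2 ≤ b) (m : ℕ) (h : ℕ → ℕ) (hh : ∀ i, h i < b) (x : ℝ) :
    ∑ k ∈ Finset.range (b ^ m), cc b m h k * wal1 b k x
      = ∏ i ∈ Finset.range m, if realDigit b x i = h i then (b : ℂ) else 0 := by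
  have := digit_prod_sum hb m (fun i d => (starRingEnd ℂ) (om b ^ (d * h i)) *
    om b ^ (d * realDigit b x i))
  simp_rw [char_sum hb _ _ (realDigit_lt hb x _) (hh _)] at this
  rw [← this]
  refine Finset.sum_congr rfl fun k hk => ?_
  rw [wal1_eq hb k m (Finset.mem_range.1 hk), cc, Finset.prod_mul_distrib]

def fool (b m : ℕ) {s : ℕ} (h : Fin s → ℕ → ℕ) (ε : ℝ) (x : Fin s → ℝ) : ℝ :=
  ε * ∏ j, ∏ i ∈ Finset.range m, if realDigit b (x j) i = h j i then (b : ℝ) else 0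

def box (b m s : ℕ) : Finset (Fin s → ℕ) := Fintype.piFinset fun _ => Finset.range (b ^ m)

lemma fool_eq {b : ℕ} (hb : 2 ≤ b) (m : ℕ) {s : ℕ} (h : Fin s → ℕ → ℕ) (hh : ∀ j i, h j i < b)
    (ε : ℝ) (x : Fin s → ℝ) :
    (fool b m h ε x : ℂ) = ∑ k ∈ box b m s, (ε * ∏ j, cc b m (h j) (k j)) * wal b k x := by
  have := Finset.prod_univ_sum (fun _ : Fin s => Finset.range (b ^ m))
    (fun j k => cc b m (h j) k * wal1 b k (x j))
  simp_rw [kernel1 hb m _ (hh _)] at this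
  unfold fool wal box
  push_cast
  simp_rw [mul_assoc, ← Finset.prod_mul_distrib]
  rw [← Finset.mul_sum, ← this]
  congr 1
  refine Finset.prod_congr rfl fun j _ => Finset.prod_congr rfl fun i _ => ?_
  split_ifs <;> simp

lemma fool_coeff {b : ℕ} (hb : 2 ≤ b) (m : ℕ) {s : ℕ} (h : Fin s → ℕ → ℕ) (hh : ∀ j i, h j i < b)
    (ε : ℝ) (l : Fin s → ℕ) :
    walshCoeff b (fool b m h ε) l
      = if l ∈ box b m s then ε * ∏ j, cc b m (h j) (l j) else 0 := by
  unfold walshCoeff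
  simp_rw [fool_eq hb m h hh, Finset.sum_mul, mul_assoc _ (wal b _ _)]
  rw [integral_finsetSum]
  · simp_rw [integral_const_mul, integral_wal hb]
    simp
  · intro k _
    apply Integrable.const_mul
    apply Integrable.of_bound (C := 1)
    · exact ((measurable_wal b k).mul (continuous_star.measurable.comp
        (measurable_wal b l))).aestronglyMeasurable
    · refine Eventually.of_forall fun x => ?_
      simp [wal_norm hb]

lemma fool_coeff_norm {b : ℕ} (hb : 2 ≤ b) (m : ℕ) {s : ℕ} (h : Fin s → ℕ → ℕ)
    (hh : ∀ j i, h j i < b) (ε : ℝ) (a : Fin s → ℝ) (X : ℝ) (hX : ∀ k ∈ box b m s, dickWtV b a k ≤ X)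
    (hε : |ε| ≤ (b : ℝ) ^ (-X)) (l : Fin s → ℕ) :
    ‖walshCoeff b (fool b m h ε) l‖ * (b : ℝ) ^ dickWtV b a l ≤ 1 := by
  rw [fool_coeff hb m h hh]
  have hb1 : (1 : ℝ) ≤ b := by exact_mod_cast (by omega : 1 ≤ b)
  have hb0 : (0 : ℝ) < b := by linarith
  split_ifs with hl
  · rw [norm_mul, norm_prod]
    simp only [cc_norm hb, Finset.prod_const_one, mul_one, Complex.norm_real, Real.norm_eq_abs]
    calc |ε| * (b : ℝ) ^ dickWtV b a l ≤ (b : ℝ) ^ (-X) * (b : ℝ) ^ X := by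
          gcongr
          exact hX l hl
      _ = 1 := by rw [← Real.rpow_add hb0]; simp
  · simp

lemma fool_mem {b : ℕ} (hb : 2 ≤ b) (m : ℕ) {s : ℕ} (h : Fin s → ℕ → ℕ)
    (hh : ∀ j i, h j i < b) (ε : ℝ) (a : Fin s → ℝ) (X : ℝ) (hX : ∀ k ∈ box b m s, dickWtV b a k ≤ X)
    (hε : |ε| ≤ (b : ℝ) ^ (-X)) :
    MemW b a (fool b m h ε) ∧ normW b a (fool b m h ε) ≤ 1 ∧ intBox s (fool b m h ε) = ε := by
  refine ⟨⟨?_, ?_⟩, ?_, ?_⟩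
  · intro x _
    rw [fool_eq hb m h hh]
    have := hasSum_sum_of_ne_finset_zero (L := SummationFilter.unconditional _)
      (f := fun k => walshCoeff b (fool b m h ε) k * wal b k x)
      (s := box b m s) (by intro k hk; rw [fool_coeff hb m h hh, if_neg hk, zero_mul])
    convert this using 1
    refine Finset.sum_congr rfl fun k hk => ?_
    rw [fool_coeff hb m h hh, if_pos hk]
  · refine ⟨1, ?_⟩
    rintro _ ⟨k, rfl⟩
    exact fool_coeff_norm hb m h hh ε a X hX hε k
  · exact ciSup_le fun k => fool_coeff_norm hb m h hh ε a X hX hε k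
  · have : (intBox s (fool b m h ε) : ℂ) = ε := by
      rw [intBox_eq b, fool_coeff hb m h hh, if_pos]
      · simp [cc_zero]
      · rw [box, Fintype.mem_piFinset]
        intro j
        simp only [Pi.zero_apply, Finset.mem_range]
        exact pow_pos (by omega) _
    exact_mod_cast this

lemma exists_digits {b : ℕ} (hb : 2 ≤ b) (m n s : ℕ) (hn : n < b ^ (m * s))
    (t : Fin n → Fin s → ℝ) : ∃ h : Fin s → ℕ → ℕ, (∀ j i, h j i < b) ∧
      ∀ p, ∃ j, ∃ i < m, realDigit b (t p j) i ≠ h j i := by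
  let D : Fin n → (Fin s → Fin m → Fin b) := fun p j i => ⟨realDigit b (t p j) i, realDigit_lt hb _ _⟩
  have : ¬ Function.Surjective D := by
    intro hs
    have := Fintype.card_le_of_surjective D hs
    simp [← pow_mul] at this
    omega
  simp only [Function.Surjective, not_forall, not_exists] at this
  obtain ⟨h, hh⟩ := this
  refine ⟨fun j i => if hi : i < m then (h j ⟨i, hi⟩ : ℕ) else 0, ?_, ?_⟩
  · intro j i
    dsimp only
    split_ifs
    · exact (h j _).2
    · omega
  · intro p
    by_contra! hc
    apply hh p
    funext j i
    apply Fin.ext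
    have := hc j i i.2
    simpa using this

lemma fool_vanish {b : ℕ} (m : ℕ) {s : ℕ} (h : Fin s → ℕ → ℕ) (ε : ℝ) (x : Fin s → ℝ)
    (hx : ∃ j, ∃ i < m, realDigit b (x j) i ≠ h j i) : fool b m h ε x = 0 := by
  obtain ⟨j, i, hi, hne⟩ := hx
  unfold fool
  rw [Finset.prod_eq_zero (Finset.mem_univ j), mul_zero]
  exact Finset.prod_eq_zero (Finset.mem_range.2 hi) (if_neg hne)

lemma lower_aux {b : ℕ} (hb : 2 ≤ b) (m n s : ℕ) (hn : n < b ^ (m * s)) (a : Fin s → ℝ) (X : ℝ)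
    (hX : ∀ k ∈ box b m s, dickWtV b a k ≤ X) :
    ENNReal.ofReal ((b : ℝ) ^ (-X)) ≤ minErr n s {f | MemW b a f} (normW b a) := by
  unfold minErr
  refine le_iInf fun t => le_iInf fun _ => le_iInf fun φ => ?_
  obtain ⟨h, hh, hv⟩ := exists_digits hb m n s hn t
  have hb0 : (0 : ℝ) < (b : ℝ) ^ (-X) := Real.rpow_pos_of_pos (by positivity) _
  set δ := (b : ℝ) ^ (-X) with hδ
  have key : ∀ ε : ℝ, |ε| ≤ δ → ENNReal.ofReal |ε - φ 0| ≤
      worstErr s {f | MemW b a f} (normW b a) fun f => φ fun i => f (t i) := by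
    intro ε hε
    obtain ⟨h1, h2, h3⟩ := fool_mem hb m h hh ε a X hX hε
    unfold worstErr
    refine le_iSup_of_le (fool b m h ε) (le_iSup_of_le h1 (le_iSup_of_le h2 ?_))
    rw [h3]
    have : (fun i => fool b m h ε (t i)) = 0 := by
      funext i; exact fool_vanish m h ε _ (hv i)
    simp only [this]
    exact le_rfl
  rcases le_total 0 (φ 0) with h0 | h0
  · refine le_trans (ENNReal.ofReal_le_ofReal ?_) (key (-δ) (by rw [abs_neg, abs_of_pos hb0]))
    rw [abs_of_nonpos (by linarith)]; linarith
  · refine le_trans (ENNReal.ofReal_le_ofReal ?_) (key δ (by rw [abs_of_pos hb0]))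
    rw [abs_of_nonneg (by linarith)]; linarith

lemma dick_box {b : ℕ} (hb : 2 ≤ b) (m s : ℕ) (a : Fin s → ℝ) (k : Fin s → ℕ) (hk : k ∈ box b m s) :
    dickWtV b a k ≤ s * (m * (m + 1) / 2) + m * ∑ j, |a j| := by
  have h1 : ∀ j, dickWt b (a j) (k j) ≤ (m * (m + 1) / 2 : ℝ) + m * |a j| := by
    intro j
    have : k j < b ^ m := by
      have := Fintype.mem_piFinset.1 hk j
      simpa using this
    rw [dickWt_eq hb _ _ m this]
    have h2 : ∀ m : ℕ, ∑ i ∈ Finset.range m, ((i : ℝ) + 1 + |a j|)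
        = (m * (m + 1) / 2 : ℝ) + m * |a j| := by
      intro m
      induction m with
      | zero => simp
      | succ m ih => rw [Finset.sum_range_succ, ih]; push_cast; ring
    rw [← h2]
    refine Finset.sum_le_sum fun i _ => ?_
    split_ifs
    · have := le_abs_self (a j); linarith
    · positivity
  unfold dickWtV
  refine (Finset.sum_le_sum fun j _ => h1 j).trans ?_
  rw [Finset.sum_add_distrib, ← Finset.mul_sum]
  simp

lemma lower_bound {b : ℕ} (hb : 2 ≤ b) (s : ℕ) (hs : 0 < s) (a : Fin s → ℝ) :
    ∃ c₁ c₂ : ℝ, 0 < c₁ ∧ 0 < c₂ ∧ ∀ n : ℕ, 0 < n →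
      ENNReal.ofReal
          (Real.exp (-(Real.log n) ^ 2 / (2 * s * Real.log b) - c₁ * Real.log n - c₂)) ≤
        minErr n s {f | MemW b a f} (normW b a) := by
  have hs' : (0 : ℝ) < s := by exact_mod_cast hs
  have hb1 : (1 : ℝ) < b := by exact_mod_cast (by omega : 1 < b)
  have hB : 0 < Real.log b := Real.log_pos hb1
  set B := Real.log b with hBdef
  set α := ∑ j, |a j| with hα
  have hα0 : 0 ≤ α := Finset.sum_nonneg fun _ _ => abs_nonneg _
  refine ⟨(3 * s / 2 + α) / s, (s + α) * B, by positivity, by positivity, ?_⟩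
  intro n hn
  have hn1 : (1 : ℝ) ≤ n := by exact_mod_cast hn
  have hL : 0 ≤ Real.log n := Real.log_nonneg hn1
  set L := Real.log n / (s * B) with hLdef
  have hL0 : 0 ≤ L := by positivity
  have hlog : Real.log n = L * (s * B) := by rw [hLdef]; field_simp
  set m := ⌊L⌋₊ + 1 with hm
  have hm1 : (m : ℝ) ≤ L + 1 := by
    rw [hm]; push_cast; linarith [Nat.floor_le hL0]
  have hm2 : L < m := by rw [hm]; push_cast; exact Nat.lt_floor_add_one L
  have hnm : n < b ^ (m * s) := by
    have : (n : ℝ) < (b : ℝ) ^ (m * s) := by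
      rw [← Real.log_lt_log_iff (by positivity) (by positivity), Real.log_pow, hlog]
      push_cast
      rw [mul_assoc]
      exact mul_lt_mul_of_pos_right hm2 (by positivity)
    exact_mod_cast this
  refine le_trans (ENNReal.ofReal_le_ofReal ?_)
    (lower_aux hb m n s hnm a _ (fun k hk => dick_box hb m s a k hk))
  rw [Real.rpow_def_of_pos (by positivity), ← hBdef, hlog]
  apply Real.exp_le_exp.2
  have e : -(L * (s * B)) ^ 2 / (2 * s * B) - (3 * s / 2 + α) / s * (L * (s * B)) - (s + α) * B
      = B * -(s * ((L + 1) * (L + 2) / 2) + (L + 1) * α) := by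
    field_simp; ring
  rw [e]
  apply mul_le_mul_of_nonneg_left _ hB.le
  apply neg_le_neg
  have : (m : ℝ) + 1 ≤ L + 2 := by linarith
  gcongr

/-! ### upper bound -/

def Kc (b : ℕ) (a : ℝ) : ℝ := (b - 1) * (b : ℝ) ^ |a| / Real.log b

lemma weight1 {b : ℕ} (hb : 2 ≤ b) (a : ℝ) (r : ℝ) (hr : 0 < r) (hr1 : r ≤ 1) (M : ℕ) :
    ∑ k ∈ Finset.range (b ^ M), (b : ℝ) ^ (-(r * dickWt b a k)) ≤ Real.exp (Kc b a / r) := by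
  have hb1 : (1 : ℝ) < b := by exact_mod_cast (by omega : 1 < b)
  have hb0 : (0 : ℝ) < b := by linarith
  have hB : 0 < Real.log b := Real.log_pos hb1
  have h1 : ∀ k ∈ Finset.range (b ^ M), (b : ℝ) ^ (-(r * dickWt b a k)) =
      ∏ i ∈ Finset.range M, (fun i d => if d ≠ 0 then (b : ℝ) ^ (-(r * ((i : ℝ) + 1 + a))) else 1)
        i (natDigit b k i) := by
    intro k hk
    rw [dickWt_eq hb a k M (Finset.mem_range.1 hk), Finset.mul_sum, ← Finset.sum_neg_distrib,
      Real.rpow_sum_of_pos hb0]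
    refine Finset.prod_congr rfl fun i _ => ?_
    dsimp only
    split_ifs <;> simp
  rw [Finset.sum_congr rfl h1, digit_prod_sum hb M (fun i d => if d ≠ 0 then (b : ℝ) ^ (-(r * ((i : ℝ) + 1 + a))) else 1)]
  set q : ℝ := (b : ℝ) ^ (-r) with hq
  have hq0 : 0 < q := Real.rpow_pos_of_pos hb0 _
  have hq1 : q < 1 := Real.rpow_lt_one_of_one_lt_of_neg hb1 (by linarith)
  have h2 : ∀ i : ℕ, (b : ℝ) ^ (-(r * ((i : ℝ) + 1 + a))) ≤ (b : ℝ) ^ |a| * (q * q ^ i) := by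
    intro i
    have : -(r * ((i : ℝ) + 1 + a)) = -(r * a) + (-r + (-r) * i) := by ring
    rw [this, Real.rpow_add hb0, Real.rpow_add hb0, Real.rpow_mul hb0.le, Real.rpow_natCast]
    apply mul_le_mul_of_nonneg_right _ (by positivity)
    apply Real.rpow_le_rpow_of_exponent_le hb1.le
    calc -(r * a) ≤ |r * a| := neg_le_abs _
      _ = r * |a| := by rw [abs_mul, abs_of_pos hr]
      _ ≤ |a| := by nlinarith [abs_nonneg a]
  have h3 : ∀ i ∈ Finset.range M, ∑ d ∈ Finset.range b,
      (if d ≠ 0 then (b : ℝ) ^ (-(r * ((i : ℝ) + 1 + a))) else 1)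
      ≤ Real.exp ((b - 1) * ((b : ℝ) ^ |a| * (q * q ^ i))) := by
    intro i _
    obtain ⟨c, rfl⟩ : ∃ c, b = c + 1 := ⟨b - 1, by omega⟩
    rw [Finset.sum_range_succ']
    simp only [ne_eq, Nat.add_eq_zero_iff, one_ne_zero, and_false, not_false_eq_true, if_true,
      not_true_eq_false, if_false, Finset.sum_const, Finset.card_range, nsmul_eq_mul]
    refine le_trans ?_ (Real.add_one_le_exp _)
    have := h2 i
    have hc : (((c + 1 : ℕ) : ℝ) - 1) = c := by push_cast; ring
    rw [hc]
    gcongr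
  refine (Finset.prod_le_prod (fun i _ => Finset.sum_nonneg fun d _ => by positivity) h3).trans ?_
  rw [← Real.exp_sum]
  apply Real.exp_le_exp.2
  rw [← Finset.mul_sum, ← Finset.mul_sum, ← Finset.mul_sum]
  have h4 : ∑ i ∈ Finset.range M, q ^ i ≤ (1 - q)⁻¹ :=
    sum_le_hasSum _ (fun i _ => by positivity) (hasSum_geometric_of_lt_one hq0.le hq1)
  have h5 : q * (1 - q)⁻¹ ≤ (r * Real.log b)⁻¹ := by
    have e1 : r * Real.log b + 1 ≤ (b : ℝ) ^ r := by
      rw [Real.rpow_def_of_pos hb0, mul_comm (Real.log b)]; exact Real.add_one_le_exp _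
    have e2 : (b : ℝ) ^ r * q = 1 := by rw [hq, ← Real.rpow_add hb0]; simp
    rw [← div_eq_mul_inv, div_le_iff₀ (by linarith), inv_mul_eq_div, le_div_iff₀ (by positivity)]
    nlinarith
  calc (b - 1) * ((b : ℝ) ^ |a| * (q * ∑ i ∈ Finset.range M, q ^ i))
      ≤ (b - 1) * ((b : ℝ) ^ |a| * (r * Real.log b)⁻¹) := by
        have : (0 : ℝ) ≤ b - 1 := by linarith
        have h6 : q * ∑ i ∈ Finset.range M, q ^ i ≤ (r * Real.log b)⁻¹ :=
          (mul_le_mul_of_nonneg_left h4 hq0.le).trans h5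
        gcongr
    _ = Kc b a / r := by unfold Kc; field_simp

lemma weightV {b : ℕ} (hb : 2 ≤ b) {s : ℕ} (a : Fin s → ℝ) (r : ℝ) (hr : 0 < r) (hr1 : r ≤ 1)
    (u : Finset (Fin s → ℕ)) :
    ∑ k ∈ u, (b : ℝ) ^ (-(r * dickWtV b a k)) ≤ Real.exp ((∑ j, Kc b (a j)) / r) := by
  have hb0 : (0 : ℝ) < b := by positivity
  obtain ⟨M, hM⟩ : ∃ M, u ⊆ box b M s := by
    refine ⟨u.sup fun k => Finset.univ.sup k, fun k hk => ?_⟩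
    rw [box, Fintype.mem_piFinset]
    intro j
    rw [Finset.mem_range]
    have h1 : k j ≤ Finset.univ.sup k := Finset.le_sup (Finset.mem_univ j)
    have h2 : Finset.univ.sup k ≤ u.sup fun k => Finset.univ.sup k :=
      Finset.le_sup (f := fun k : Fin s → ℕ => Finset.univ.sup k) hk
    exact lt_of_lt_of_le (Nat.lt_pow_self (by omega : 1 < b))
      (Nat.pow_le_pow_right (by omega) (h1.trans h2))
  refine (Finset.sum_le_sum_of_subset_of_nonneg hM (fun _ _ _ => by positivity)).trans ?_
  have e : ∀ k : Fin s → ℕ, (b : ℝ) ^ (-(r * dickWtV b a k))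
      = ∏ j, (b : ℝ) ^ (-(r * dickWt b (a j) (k j))) := by
    intro k
    rw [dickWtV, Finset.mul_sum, ← Finset.sum_neg_distrib, Real.rpow_sum_of_pos hb0]
  simp_rw [e]
  have := Finset.prod_univ_sum (fun _ : Fin s => Finset.range (b ^ M))
    (fun j k => (b : ℝ) ^ (-(r * dickWt b (a j) k)))
  rw [box, ← this, Finset.sum_div, Real.exp_sum]
  exact Finset.prod_le_prod (fun j _ => Finset.sum_nonneg fun _ _ => by positivity)
    (fun j _ => weight1 hb (a j) r hr hr1 M)

lemma summ_weight {b : ℕ} (hb : 2 ≤ b) {s : ℕ} (a : Fin s → ℝ) (r : ℝ) (hr : 0 < r) (hr1 : r ≤ 1) :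
    Summable fun k : Fin s → ℕ => (b : ℝ) ^ (-(r * dickWtV b a k)) :=
  summable_of_sum_le (fun _ => by positivity) (weightV hb a r hr hr1)

lemma finite_A {b : ℕ} (hb : 2 ≤ b) {s : ℕ} (a : Fin s → ℝ) (T : ℝ) :
    {k : Fin s → ℕ | dickWtV b a k ≤ T}.Finite := by
  have hb1 : (1 : ℝ) < b := by exact_mod_cast (by omega : 1 < b)
  have h := (summ_weight hb a 1 one_pos le_rfl).tendsto_cofinite_zero
  have h2 := h.eventually_lt_const (u := (b : ℝ) ^ (-T)) (by positivity)
  rw [Filter.eventually_cofinite] at h2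
  refine h2.subset fun k hk => ?_
  simp only [Set.mem_ofPred_eq, not_lt, one_mul] at hk ⊢
  exact Real.rpow_le_rpow_of_exponent_le hb1.le (by linarith)

/-- Tchakaloff-type quadrature. -/
lemma quad {b : ℕ} (hb : 2 ≤ b) {s : ℕ} (A : Finset (Fin s → ℕ)) (n : ℕ) (hn : 2 * A.card + 1 ≤ n) :
    ∃ (ι : Type) (_ : Fintype ι) (e : ι → Fin n) (t : Fin n → Fin s → ℝ) (w : ι → ℝ),
      (∀ i, t i ∈ unitCube s) ∧ (∀ i, 0 < w i) ∧ ∑ i, w i = 1 ∧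
      ∀ k ∈ A, ∑ i, (w i : ℂ) * wal b k (t (e i)) = ∫ x in unitCube s, wal b k x := by
  classical
  let F : (Fin s → ℝ) → (A → ℂ) := fun x k => wal b k x
  have hfin : (F '' unitCube s).Finite := by
    have h1 : {z : ℂ | z ^ b = 1}.Finite := by
      refine (Polynomial.nthRoots b (1 : ℂ)).toFinset.finite_toSet.subset fun z hz => ?_
      simp only [Finset.mem_coe, Multiset.mem_toFinset]
      rw [Polynomial.mem_nthRoots (by omega)]
      exact hz
    refine (Set.Finite.pi' (ι := A) (fun _ => h1)).subset ?_
    rintro _ ⟨x, _, rfl⟩ k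
    exact wal_mem_roots hb _ _
  have hmeas : Measurable F := measurable_pi_lambda _ fun k => measurable_wal b _
  have hintF : Integrable F (volume.restrict (unitCube s)) := by
    apply Integrable.of_bound (C := 1) hmeas.aestronglyMeasurable
    refine Eventually.of_forall fun x => ?_
    rw [pi_norm_le_iff_of_nonneg zero_le_one]
    intro k
    exact (wal_norm hb _ _).le
  have hmem : ∫ x in unitCube s, F x ∈ convexHull ℝ (F '' unitCube s) := by
    apply Convex.integral_mem (convex_convexHull ℝ _) (hfin.isClosed_convexHull ℝ) _ hintF
    filter_upwards [ae_restrict_mem (measurableSet_cube s)] with x hx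
    exact subset_convexHull ℝ _ ⟨x, hx, rfl⟩
  obtain ⟨ι, hι, z, w, hz, haff, hw, hw1, hsum⟩ := eq_pos_convex_span_of_mem_convexHull hmem
  have hcard : Fintype.card ι ≤ n := by
    refine haff.card_le_finrank_succ.trans (le_trans ?_ hn)
    have h1 := Submodule.finrank_le (vectorSpan ℝ (Set.range z))
    have h2 : Module.finrank ℝ (A → ℂ) = 2 * A.card := by
      rw [Module.finrank_pi_fintype]
      simp [mul_comm]
    omega
  have hp : ∀ i, ∃ x ∈ unitCube s, F x = z i := fun i => hz ⟨i, rfl⟩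
  choose p hp1 hp2 using hp
  obtain ⟨e⟩ : Nonempty (ι ↪ Fin n) :=
    Function.Embedding.nonempty_of_card_le (by simpa using hcard)
  refine ⟨Fin (Fintype.card ι), inferInstance, fun i => e ((Fintype.equivFin ι).symm i),
    Function.extend e p (fun _ => 0), fun i => w ((Fintype.equivFin ι).symm i), ?_, ?_, ?_, ?_⟩
  · intro i
    by_cases hi : ∃ j, e j = i
    · obtain ⟨j, rfl⟩ := hi
      rw [e.injective.extend_apply]; exact hp1 j
    · rw [Function.extend_apply' _ _ _ hi]
      simp [unitCube]
  · intro i; exact hw _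
  · rw [← hw1]
    exact Equiv.sum_comp (Fintype.equivFin ι).symm w
  · intro k hk
    simp_rw [e.injective.extend_apply]
    rw [Equiv.sum_comp (Fintype.equivFin ι).symm (fun i => (w i : ℂ) * wal b k (p i))]
    have h1 := congrFun hsum ⟨k, hk⟩
    have h2 : (∫ x in unitCube s, F x) ⟨k, hk⟩ = ∫ x in unitCube s, wal b k x := by
      rw [eval_integral]
      intro i
      exact hintF.eval i
    rw [← h2, ← h1, Finset.sum_apply]
    refine Finset.sum_congr rfl fun i _ => ?_
    rw [Pi.smul_apply, Complex.real_smul, ← hp2 i]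

lemma coeff_le {b : ℕ} (hb : 2 ≤ b) {s : ℕ} (a : Fin s → ℝ) (f : (Fin s → ℝ) → ℝ) (hf : MemW b a f)
    (hN : normW b a f ≤ 1) (k : Fin s → ℕ) : ‖walshCoeff b f k‖ ≤ (b : ℝ) ^ (-dickWtV b a k) := by
  have h := (le_ciSup hf.2 k).trans hN
  rw [Real.rpow_neg (by positivity)]
  rw [← one_div, le_div_iff₀ (by positivity)]
  exact h

lemma upper_aux {b : ℕ} (hb : 2 ≤ b) {s : ℕ} (a : Fin s → ℝ) (T : ℝ) (n : ℕ)
    (hn : 2 * (finite_A hb a T).toFinset.card + 1 ≤ n) :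
    minErr n s {f | MemW b a f} (normW b a) ≤
      ENNReal.ofReal ((b : ℝ) ^ (-(T / 2)) * Real.exp ((∑ j, Kc b (a j)) / (1 / 2))) := by
  have hb1 : (1 : ℝ) < b := by exact_mod_cast (by omega : 1 < b)
  obtain ⟨ι, hι, e, t, w, ht, hw, hw1, hQ⟩ := quad hb _ n hn
  unfold minErr
  refine iInf_le_of_le t (iInf_le_of_le ht (iInf_le_of_le (fun v => ∑ i, w i * v (e i)) ?_))
  unfold worstErr
  refine iSup_le fun f => iSup_le fun hf => iSup_le fun hN => ENNReal.ofReal_le_ofReal ?_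
  dsimp only
  set Q : (Fin s → ℕ) → ℂ := fun k => ∑ i, (w i : ℂ) * wal b k (t (e i)) with hQdef
  have hsum : HasSum (fun k => walshCoeff b f k * Q k) ((∑ i, w i * f (t (e i)) : ℝ) : ℂ) := by
    have h1 := hasSum_sum (s := Finset.univ) (f := fun (i : ι) (k : Fin s → ℕ) =>
      (w i : ℂ) * (walshCoeff b f k * wal b k (t (e i)))) (a := fun i => (w i : ℂ) * (f (t (e i)) : ℂ))
      (L := SummationFilter.unconditional _)
      (fun i _ => (hf.1 _ (ht (e i))).mul_left _)
    push_cast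
    convert h1 using 2 with k
    rw [hQdef, Finset.mul_sum]
    refine Finset.sum_congr rfl fun i _ => by ring
  have hQ0 : Q 0 = 1 := by
    rw [hQdef]; simp only [wal_zero, mul_one]; exact_mod_cast hw1
  have h0 : HasSum (fun k : Fin s → ℕ => if k = 0 then walshCoeff b f 0 else 0) (walshCoeff b f 0) :=
    hasSum_ite_eq 0 _
  have hd := h0.sub hsum
  rw [← intBox_eq, ← Complex.ofReal_sub] at hd
  have hg := ((summ_weight hb a (1 / 2) (by norm_num) (by norm_num)).hasSum).mul_left
    ((b : ℝ) ^ (-(T / 2)))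
  have hfin := hd.norm_le_of_bounded hg ?_
  · rw [Complex.norm_real, Real.norm_eq_abs] at hfin
    refine hfin.trans ?_
    apply mul_le_mul_of_nonneg_left _ (by positivity)
    exact (summ_weight hb a (1 / 2) (by norm_num) (by norm_num)).tsum_le_of_sum_le
      (weightV hb a (1 / 2) (by norm_num) (by norm_num))
  · intro k
    by_cases hk : k = 0
    · subst hk
      rw [if_pos rfl, hQ0, mul_one, intBox_eq b, sub_self, norm_zero]
      positivity
    · simp only [if_neg hk, zero_sub, norm_neg]
      by_cases hkA : dickWtV b a k ≤ T
      · have : Q k = 0 := by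
          have h1 := hQ k (by simpa using hkA)
          have h2 := integral_wal hb k 0
          simp only [wal_zero, map_one, mul_one, if_neg hk] at h2
          rw [h2] at h1
          exact h1
        rw [this, mul_zero, norm_zero]
        positivity
      · push Not at hkA
        have hQn : ‖Q k‖ ≤ 1 := by
          rw [hQdef, ← hw1]
          refine (norm_sum_le _ _).trans (Finset.sum_le_sum fun i _ => ?_)
          rw [norm_mul, wal_norm hb, mul_one, Complex.norm_real, Real.norm_eq_abs,
            abs_of_pos (hw i)]
        rw [norm_mul]
        calc ‖walshCoeff b f k‖ * ‖Q k‖ ≤ (b : ℝ) ^ (-dickWtV b a k) * 1 :=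
              mul_le_mul (coeff_le hb a f hf hN k) hQn (norm_nonneg _) (by positivity)
          _ ≤ _ := by
              rw [mul_one, ← Real.rpow_add (by positivity)]
              apply Real.rpow_le_rpow_of_exponent_le hb1.le
              linarith

lemma upper_trivial {b : ℕ} (hb : 2 ≤ b) {s : ℕ} (a : Fin s → ℝ) (n : ℕ) :
    minErr n s {f | MemW b a f} (normW b a) ≤ 1 := by
  unfold minErr
  refine iInf_le_of_le (fun _ => 0) (iInf_le_of_le (by intro i; simp [unitCube])
    (iInf_le_of_le (fun v => 0) ?_))
  unfold worstErr
  refine iSup_le fun f => iSup_le fun hf => iSup_le fun hN => ?_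
  rw [← ENNReal.ofReal_one]
  refine ENNReal.ofReal_le_ofReal ?_
  have h := coeff_le hb a f hf hN 0
  rw [← intBox_eq, Complex.norm_real, Real.norm_eq_abs] at h
  simpa [dickWtV, dickWt] using h

lemma card_A {b : ℕ} (hb : 2 ≤ b) {s : ℕ} (a : Fin s → ℝ) (R : ℝ) (hR : 1 ≤ R) :
    ((finite_A hb a (R ^ 2)).toFinset.card : ℝ)
      ≤ Real.exp ((Real.log b + ∑ j, Kc b (a j)) * R) := by
  have hb1 : (1 : ℝ) < b := by exact_mod_cast (by omega : 1 < b)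
  have hb0 : (0 : ℝ) < b := by linarith
  have hR0 : 0 < R := by linarith
  have h := weightV hb a (1 / R) (by positivity) ((div_le_one hR0).2 hR)
    (finite_A hb a (R ^ 2)).toFinset
  have h2 : ((finite_A hb a (R ^ 2)).toFinset.card : ℝ) * (b : ℝ) ^ (-R) ≤
      ∑ k ∈ (finite_A hb a (R ^ 2)).toFinset, (b : ℝ) ^ (-(1 / R * dickWtV b a k)) := by
    rw [← nsmul_eq_mul]
    refine Finset.card_nsmul_le_sum _ _ _ fun k hk => ?_
    apply Real.rpow_le_rpow_of_exponent_le hb1.le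
    simp only [Set.Finite.mem_toFinset, Set.mem_ofPred_eq] at hk
    apply neg_le_neg
    rw [one_div, inv_mul_eq_div, div_le_iff₀ hR0]
    linarith
  have h3 := h2.trans h
  rw [Real.rpow_def_of_pos hb0] at h3
  rw [add_mul, Real.exp_add]
  have h4 : Real.exp (Real.log b * R) * Real.exp (Real.log b * -R) = 1 := by
    rw [← Real.exp_add]; simp
  have h5 : (∑ j, Kc b (a j)) / (1 / R) = (∑ j, Kc b (a j)) * R := by field_simp
  rw [h5] at h3
  calc ((finite_A hb a (R ^ 2)).toFinset.card : ℝ)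
      = Real.exp (Real.log b * R) *
        ((finite_A hb a (R ^ 2)).toFinset.card * Real.exp (Real.log b * -R)) := by
        linear_combination (-((finite_A hb a (R ^ 2)).toFinset.card : ℝ)) * h4
    _ ≤ _ := by gcongr

lemma upper_bound {b : ℕ} (hb : 2 ≤ b) (s : ℕ) (a : Fin s → ℝ) :
    ∃ c₃ c₄ : ℝ, 0 < c₃ ∧ 0 < c₄ ∧ ∀ n : ℕ, 0 < n →
      minErr n s {f | MemW b a f} (normW b a) ≤
          ENNReal.ofReal (c₃ * Real.exp (-c₄ * (Real.log n) ^ 2)) := by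
  have hb1 : (1 : ℝ) < b := by exact_mod_cast (by omega : 1 < b)
  have hb0 : (0 : ℝ) < b := by linarith
  have hB : 0 < Real.log b := Real.log_pos hb1
  set B := Real.log b with hBdef
  set K := ∑ j, Kc b (a j) with hK
  have hK0 : 0 ≤ K := Finset.sum_nonneg fun j _ => by
    unfold Kc
    have : (0 : ℝ) ≤ b - 1 := by linarith
    positivity
  set D := B + K + 2 with hD
  have hD0 : 0 < D := by positivity
  refine ⟨Real.exp (K / (1 / 2)) + Real.exp (B / 2), B / (2 * D ^ 2), by positivity, by positivity, ?_⟩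
  intro n hn
  have hn1 : (1 : ℝ) ≤ n := by exact_mod_cast hn
  have hL : 0 ≤ Real.log n := Real.log_nonneg hn1
  rcases le_or_gt D (Real.log n) with hc | hc
  · set R := Real.log n / D with hR
    have hR1 : 1 ≤ R := by rw [hR, le_div_iff₀ hD0]; linarith
    have hlog : Real.log n = R * D := by rw [hR]; field_simp
    have hcard := card_A hb a R hR1
    rw [← hBdef, ← hK] at hcard
    have hexp1 : (1 : ℝ) ≤ Real.exp ((B + K) * R) := Real.one_le_exp (by positivity)
    have h3 : (3 : ℝ) ≤ Real.exp (2 * R) := by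
      have := Real.add_one_le_exp (2 * R); linarith
    have hle : 2 * (finite_A hb a (R ^ 2)).toFinset.card + 1 ≤ n := by
      have : (2 * (finite_A hb a (R ^ 2)).toFinset.card + 1 : ℝ) ≤ n := by
        calc (2 * (finite_A hb a (R ^ 2)).toFinset.card + 1 : ℝ)
            ≤ 3 * Real.exp ((B + K) * R) := by linarith
          _ ≤ Real.exp (2 * R) * Real.exp ((B + K) * R) := by gcongr
          _ = Real.exp (Real.log n) := by rw [← Real.exp_add, hlog, hD]; ring_nf
          _ = n := Real.exp_log (by linarith)
      exact_mod_cast this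
    refine (upper_aux hb a (R ^ 2) n hle).trans (ENNReal.ofReal_le_ofReal ?_)
    rw [← hK, Real.rpow_def_of_pos hb0, ← hBdef, hlog]
    have e : B * -(R ^ 2 / 2) = -(B / (2 * D ^ 2)) * (R * D) ^ 2 := by field_simp
    rw [e, mul_comm]
    gcongr
    linarith [Real.exp_pos (B / 2)]
  · refine (upper_trivial hb a n).trans ?_
    rw [← ENNReal.ofReal_one]
    apply ENNReal.ofReal_le_ofReal
    have h1 : Real.exp (-(B / 2)) ≤ Real.exp (-(B / (2 * D ^ 2)) * Real.log n ^ 2) := by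
      apply Real.exp_le_exp.2
      have : Real.log n ^ 2 ≤ D ^ 2 := by gcongr
      have h2 : B / (2 * D ^ 2) * Real.log n ^ 2 ≤ B / (2 * D ^ 2) * D ^ 2 := by gcongr
      have h3 : B / (2 * D ^ 2) * D ^ 2 = B / 2 := by field_simp
      linarith
    calc (1 : ℝ) = Real.exp (B / 2) * Real.exp (-(B / 2)) := by rw [← Real.exp_add]; simp
      _ ≤ _ := by
        gcongr
        linarith [Real.exp_pos (K / (1 / 2))]

/-- two-sided bounds of order `exp(Θ(-(log n)^2))` for the `n`-th minimal
worst-case error of integration in the Walsh space `W_{s,a}`. -/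
theorem statement0 (b : ℕ) (hb : 2 ≤ b) (s : ℕ) (hs : 0 < s) (a : ℕ → ℝ) (ha : Monotone a) :
    ∃ c₁ c₂ c₃ c₄ : ℝ, 0 < c₁ ∧ 0 < c₂ ∧ 0 < c₃ ∧ 0 < c₄ ∧
      ∀ n : ℕ, 0 < n →
        ENNReal.ofReal
            (Real.exp (-(Real.log n) ^ 2 / (2 * s * Real.log b) - c₁ * Real.log n - c₂)) ≤
          minErr n s {f | MemW b (fun j : Fin s => a j) f} (normW b (fun j : Fin s => a j)) ∧
        minErr n s {f | MemW b (fun j : Fin s => a j) f} (normW b (fun j : Fin s => a j)) ≤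
          ENNReal.ofReal (c₃ * Real.exp (-c₄ * (Real.log n) ^ 2)) := by
  obtain ⟨c₁, c₂, h1, h2, hl⟩ := lower_bound hb s hs (fun j : Fin s => a j)
  obtain ⟨c₃, c₄, h3, h4, hu⟩ := upper_bound hb s (fun j : Fin s => a j)
  exact ⟨c₁, c₂, c₃, c₄, h1, h2, h3, h4, fun n hn => ⟨hl n hn, hu n hn⟩⟩

end
end

section
/- Let b ≥ 2 be an integer and let a = (a_j)_{j≥1} be any nondecreasing sequence of real weights. Then there do not exist constants A, C, c > 0 such that e(n, s, W_{s,a}) ≤ C·exp(A·s)·exp(−c·(log n)²) holds for all s, n ∈ ℕ. -/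
open MeasureTheory Matrix Filter
open scoped ENNReal BigOperators Topology

noncomputable section

namespace WalshLB

def om (b : ℕ) : ℂ := Complex.exp (2 * Real.pi * Complex.I / (b : ℂ))

lemma om_prim {b : ℕ} (hb : 2 ≤ b) : IsPrimitiveRoot (om b) b :=
  Complex.isPrimitiveRoot_exp b (by omega)

lemma om_norm {b : ℕ} (hb : 2 ≤ b) : ‖om b‖ = 1 :=
  (om_prim hb).norm'_eq_one (by omega)

lemma om_conj {b : ℕ} (hb : 2 ≤ b) : (starRingEnd ℂ) (om b) * om b = 1 := by
  rw [mul_comm, Complex.mul_conj, Complex.normSq_eq_norm_sq, om_norm hb]; simp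

lemma root_sum {b : ℕ} (hb : 2 ≤ b) {p q : ℕ} (hp : p < b) (hq : q < b) :
    ∑ d ∈ Finset.range b, om b ^ (p * d) * (starRingEnd ℂ) (om b ^ (q * d)) =
      if p = q then (b : ℂ) else 0 := by
  have h1 : ∀ d, om b ^ (p * d) * (starRingEnd ℂ) (om b ^ (q * d)) =
      (om b ^ p * (starRingEnd ℂ) (om b) ^ q) ^ d := by
    intro d; rw [map_pow, pow_mul, pow_mul, mul_pow]
  simp_rw [h1]
  set z := om b ^ p * (starRingEnd ℂ) (om b) ^ q with hz
  have hzq : z * om b ^ q = om b ^ p := by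
    rw [hz, mul_assoc, ← mul_pow, om_conj hb, one_pow, mul_one]
  have hzb : z ^ b = 1 := by
    rw [hz, mul_pow, ← pow_mul, ← pow_mul, mul_comm p, mul_comm q, pow_mul, pow_mul,
      ← map_pow, (om_prim hb).pow_eq_one]; simp
  split_ifs with h
  · have : z = 1 := by rw [hz, h, ← mul_pow, mul_comm, om_conj hb, one_pow]
    simp [this]
  · have hz1 : z ≠ 1 := by
      intro h1; rw [h1, one_mul] at hzq
      exact h ((om_prim hb).pow_inj hp hq hzq.symm)
    have := geom_sum_mul z b
    rw [hzb, sub_self] at this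
    rcases mul_eq_zero.1 this with h | h
    · exact h
    · exact absurd (sub_eq_zero.1 h) hz1

lemma natDigit_eq_zero {b : ℕ} (hb : 2 ≤ b) {k i : ℕ} (h : k < b ^ i) : natDigit b k i = 0 := by
  simp [natDigit, Nat.div_eq_of_lt h]

lemma natDigit_eq_zero' {b : ℕ} (hb : 2 ≤ b) {k i : ℕ} (h : k ≤ i) : natDigit b k i = 0 :=
  natDigit_eq_zero hb (lt_of_le_of_lt h (Nat.lt_pow_self hb))

lemma wal1_eq {b : ℕ} (hb : 2 ≤ b) (k : ℕ) (x : ℝ) {N : ℕ} (hN : k ≤ N) :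
    wal1 b k x = om b ^ (∑ i ∈ Finset.range N, natDigit b k i * realDigit b x i) := by
  have : ∑ i ∈ Finset.range N, natDigit b k i * realDigit b x i =
      ∑ i ∈ Finset.range k, natDigit b k i * realDigit b x i := by
    symm
    apply Finset.sum_subset (Finset.range_subset_range.2 hN)
    intro i _ hi
    rw [natDigit_eq_zero' hb (by simpa using hi), zero_mul]
  rw [this, wal1, om, ← Complex.exp_nat_mul, mul_comm]

lemma wal1_norm {b : ℕ} (hb : 2 ≤ b) (k : ℕ) (x : ℝ) : ‖wal1 b k x‖ = 1 := by
  rw [wal1_eq hb k x le_rfl, norm_pow, om_norm hb, one_pow]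

lemma wal1_zero (b : ℕ) (x : ℝ) : wal1 b 0 x = 1 := by simp [wal1]

lemma wal1_meas {b : ℕ} (k : ℕ) : Measurable (wal1 b k) := by
  unfold wal1 realDigit
  apply Complex.measurable_exp.comp
  apply Measurable.const_mul
  have : Measurable fun x : ℝ => ∑ i ∈ Finset.range k, natDigit b k i *
      (⌊x * (b : ℝ) ^ (i + 1)⌋ % (b : ℤ)).toNat := by
    apply Finset.measurable_sum
    intro i _
    apply Measurable.const_mul
    exact (measurable_from_top (f := fun z : ℤ => (z % (b : ℤ)).toNat)).comp
      (Int.measurable_floor.comp (measurable_id.mul_const _))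
  exact (measurable_from_top (f := fun z : ℕ => (z : ℂ))).comp this

/-- one-step recursion -/
lemma wal1_step {b : ℕ} (hb : 2 ≤ b) {k0 d : ℕ} (k : ℕ) (hk0 : k0 < b) (hd : d < b) {u : ℝ}
    (hu : u ∈ Set.Ico (0 : ℝ) 1) :
    wal1 b (k0 + b * k) ((u + d) / b) = om b ^ (k0 * d) * wal1 b k u := by
  have hb0 : (b : ℝ) ≠ 0 := by positivity
  have hbk : k ≤ b * k := Nat.le_mul_of_pos_left k (by omega)
  rw [wal1_eq hb (k0 + b * k) _ (Nat.le_succ _), wal1_eq hb k u (N := k0 + b * k) (by omega),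
    Finset.sum_range_succ', ← pow_add]
  congr 1
  rw [add_comm]
  congr 1
  · congr 1
    · simp [natDigit, Nat.mod_eq_of_lt hk0]
    · have : ⌊u + d⌋ = (d : ℤ) := by
        rw [Int.floor_eq_iff]; push_cast; constructor <;> linarith [hu.1, hu.2]
      simp only [realDigit, zero_add, pow_one]
      rw [div_mul_cancel₀ _ hb0, this]
      rw [Int.emod_eq_of_lt (by omega) (by omega)]; simp
  · apply Finset.sum_congr rfl
    intro i _
    congr 1
    · simp only [natDigit]
      rw [pow_succ', ← Nat.div_div_eq_div_mul, Nat.add_mul_div_left _ _ (by omega),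
        Nat.div_eq_of_lt hk0, zero_add]
    · simp only [realDigit]
      congr 1
      have : (u + d) / b * (b : ℝ) ^ (i + 1 + 1) =
          u * (b : ℝ) ^ (i + 1) + (((b : ℤ) * (d * (b : ℤ) ^ i) : ℤ) : ℝ) := by
        push_cast; field_simp; ring
      rw [this, Int.floor_add_intCast, Int.add_mul_emod_self_left]

lemma sum_split {M : Type*} [AddCommMonoid M] (b N : ℕ) (F : ℕ → M) :
    ∑ k ∈ Finset.range (b * N), F k =
      ∑ k ∈ Finset.range N, ∑ k0 ∈ Finset.range b, F (k0 + b * k) := by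
  induction N with
  | zero => simp
  | succ N ih =>
    rw [Nat.mul_succ, Finset.sum_range_add, ih, Finset.sum_range_succ]
    simp [add_comm]

lemma decomp {b : ℕ} (hb : 2 ≤ b) {x : ℝ} (hx : x ∈ Set.Ico (0 : ℝ) 1) :
    ∃ d : ℕ, d < b ∧ ∃ u ∈ Set.Ico (0 : ℝ) 1, x = (u + d) / b := by
  have hb0 : (0 : ℝ) < b := by positivity
  refine ⟨⌊x * b⌋₊, ?_, x * b - ⌊x * b⌋₊, ?_, ?_⟩
  · rw [Nat.floor_lt (by have := hx.1; positivity)]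
    nlinarith [hx.2]
  · constructor
    · linarith [Nat.floor_le (show 0 ≤ x * b by have := hx.1; positivity)]
    · linarith [Nat.lt_floor_add_one (x * b)]
  · field_simp; ring

lemma floor_lem {b : ℕ} (hb : 2 ≤ b) (m d : ℕ) (u : ℝ) :
    ⌊(u + d) / b * (b : ℝ) ^ (m + 1)⌋ = ⌊u * (b : ℝ) ^ m⌋ + d * (b : ℤ) ^ m := by
  have hb0 : (b : ℝ) ≠ 0 := by positivity
  have : (u + d) / b * (b : ℝ) ^ (m + 1) = u * (b : ℝ) ^ m + ((d * (b : ℤ) ^ m : ℤ) : ℝ) := by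
    push_cast; field_simp; ring
  rw [this, Int.floor_add_intCast]

lemma floor_range {b : ℕ} (hb : 2 ≤ b) (m : ℕ) {u : ℝ} (hu : u ∈ Set.Ico (0 : ℝ) 1) :
    0 ≤ ⌊u * (b : ℝ) ^ m⌋ ∧ ⌊u * (b : ℝ) ^ m⌋ < (b : ℤ) ^ m := by
  have hb0 : (0 : ℝ) < (b : ℝ) ^ m := by positivity
  constructor
  · rw [Int.floor_nonneg]; have := hu.1; positivity
  · rw [Int.floor_lt]; push_cast; nlinarith [hu.2]

/-- Dirichlet kernel. -/
lemma kernel {b : ℕ} (hb : 2 ≤ b) (m : ℕ) : ∀ {x y : ℝ}, x ∈ Set.Ico (0 : ℝ) 1 →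
    y ∈ Set.Ico (0 : ℝ) 1 →
    ∑ k ∈ Finset.range (b ^ m), wal1 b k x * (starRingEnd ℂ) (wal1 b k y) =
      if ⌊x * (b : ℝ) ^ m⌋ = ⌊y * (b : ℝ) ^ m⌋ then (b : ℂ) ^ m else 0 := by
  induction m with
  | zero =>
    intro x y hx hy
    have h1 : ⌊x⌋ = 0 := by rw [Int.floor_eq_zero_iff]; exact hx
    have h2 : ⌊y⌋ = 0 := by rw [Int.floor_eq_zero_iff]; exact hy
    simp [wal1_zero, h1, h2]
  | succ m ih =>
    intro x y hx hy
    obtain ⟨d, hd, u, hu, rfl⟩ := decomp hb hx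
    obtain ⟨e, he, v, hv, rfl⟩ := decomp hb hy
    rw [pow_succ', sum_split, floor_lem hb, floor_lem hb]
    have h1 : ∀ k ∈ Finset.range (b ^ m), ∑ k0 ∈ Finset.range b,
        wal1 b (k0 + b * k) ((u + d) / b) * (starRingEnd ℂ) (wal1 b (k0 + b * k) ((v + e) / b)) =
        (if d = e then (b : ℂ) else 0) * (wal1 b k u * (starRingEnd ℂ) (wal1 b k v)) := by
      intro k _
      rw [← root_sum hb hd he, Finset.sum_mul]
      apply Finset.sum_congr rfl
      intro k0 hk0
      have hk0 : k0 < b := by simpa using hk0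
      rw [wal1_step hb k hk0 hd hu, wal1_step hb k hk0 he hv, map_mul, mul_comm d, mul_comm e]
      ring
    rw [Finset.sum_congr rfl h1, ← Finset.mul_sum, ih hu hv]
    have hu' := floor_range hb m hu
    have hv' := floor_range hb m hv
    by_cases hde : d = e
    · subst hde
      simp only [add_left_inj, if_true]
      split_ifs <;> ring
    · rw [if_neg hde, zero_mul, if_neg]
      intro h
      apply hde
      have hB : (0 : ℤ) < (b : ℤ) ^ m := by positivity
      have h2 := congrArg (fun z => z / (b : ℤ) ^ m) h
      simp only [Int.add_mul_ediv_right _ _ hB.ne', Int.ediv_eq_zero_of_lt hu'.1 hu'.2,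
        Int.ediv_eq_zero_of_lt hv'.1 hv'.2, zero_add] at h2
      exact_mod_cast h2

lemma int_decomp {b : ℕ} (hb : 2 ≤ b) (g : ℝ → ℂ) (hg : LocallyIntegrable g volume) :
    ∫ x in Set.Ico (0 : ℝ) 1, g x =
      (b : ℂ)⁻¹ * ∑ d ∈ Finset.range b, ∫ u in Set.Ico (0 : ℝ) 1, g ((u + d) / b) := by
  have hb0 : (b : ℝ) ≠ 0 := by positivity
  have hb0' : (b : ℂ) ≠ 0 := by exact_mod_cast hb0
  have hI : ∀ h : ℝ → ℂ, ∫ x in Set.Ico (0 : ℝ) 1, h x = ∫ x in (0 : ℝ)..1, h x := by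
    intro h
    rw [intervalIntegral.integral_of_le zero_le_one, integral_Ico_eq_integral_Ioc]
  simp_rw [hI]
  have h1 := intervalIntegral.sum_integral_adjacent_intervals (f := g) (μ := volume)
    (a := fun d : ℕ => (d : ℝ) / b) (n := b) (fun k _ => (hg.integrableOn_isCompact isCompact_uIcc).intervalIntegrable)
  simp only [Nat.cast_zero, zero_div, div_self hb0] at h1
  rw [← h1, Finset.mul_sum]
  apply Finset.sum_congr rfl
  intro d _
  have h2 : ∀ u : ℝ, g ((u + d) / b) = g (u / b + (d : ℝ) / b) := by
    intro u; rw [add_div]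
  simp_rw [h2]
  rw [intervalIntegral.integral_comp_div_add g hb0]
  simp only [zero_div, zero_add, Complex.real_smul, Complex.ofReal_natCast]
  rw [← mul_assoc, inv_mul_cancel₀ hb0', one_mul]
  congr 1
  push_cast; ring

lemma wal_li {b : ℕ} (hb : 2 ≤ b) (k l : ℕ) :
    LocallyIntegrable (fun x => wal1 b l x * (starRingEnd ℂ) (wal1 b k x)) volume := by
  apply (locallyIntegrable_const (1 : ℝ)).mono
  · exact ((wal1_meas l).mul (Complex.continuous_conj.measurable.comp
      (wal1_meas k))).aestronglyMeasurable
  · filter_upwards with x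
    simp [wal1_norm hb]

lemma ortho {b : ℕ} (hb : 2 ≤ b) (N : ℕ) : ∀ k l : ℕ, k + l ≤ N →
    ∫ x in Set.Ico (0 : ℝ) 1, wal1 b l x * (starRingEnd ℂ) (wal1 b k x) =
      if l = k then 1 else 0 := by
  induction N with
  | zero =>
    intro k l h
    obtain ⟨rfl, rfl⟩ : k = 0 ∧ l = 0 := by omega
    simp [wal1_zero]
  | succ N ih =>
    intro k l h
    by_cases h0 : k + l = 0
    · exact ih k l (by omega)
    have hb0' : (b : ℂ) ≠ 0 := by norm_cast; omega
    rw [int_decomp hb _ (wal_li hb k l)]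
    have hkd := Nat.mod_add_div k b
    have hld := Nat.mod_add_div l b
    have hkm : k % b < b := Nat.mod_lt _ (by omega)
    have hlm : l % b < b := Nat.mod_lt _ (by omega)
    have h1 : ∀ d ∈ Finset.range b, ∫ u in Set.Ico (0 : ℝ) 1,
        wal1 b l ((u + d) / b) * (starRingEnd ℂ) (wal1 b k ((u + d) / b)) =
        om b ^ (l % b * d) * (starRingEnd ℂ) (om b ^ (k % b * d)) *
          if l / b = k / b then 1 else 0 := by
      intro d hd
      have hd : d < b := by simpa using hd
      rw [← ih (k / b) (l / b) ?_, ← integral_const_mul]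
      · apply setIntegral_congr_fun measurableSet_Ico
        intro u hu
        have e1 := wal1_step hb (l / b) hlm hd hu
        have e2 := wal1_step hb (k / b) hkm hd hu
        rw [hld] at e1
        rw [hkd] at e2
        simp only [e1, e2, map_mul]
        ring
      · have hk2 : k / b ≤ k / 2 := Nat.div_le_div_left hb (by norm_num)
        have hl2 : l / b ≤ l / 2 := Nat.div_le_div_left hb (by norm_num)
        omega
    rw [Finset.sum_congr rfl h1, ← Finset.sum_mul, root_sum hb hlm hkm]
    by_cases hlk : l = k
    · subst hlk; simp [hb0']
    · rw [if_neg hlk]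
      by_cases h2 : l % b = k % b
      · have h3 : l / b ≠ k / b := by
          intro h3; apply hlk; rw [← hld, ← hkd, h2, h3]
        simp [h3]
      · simp [h2]

def chi (b m : ℕ) (x y : ℝ) : ℝ := if ⌊y * (b : ℝ) ^ m⌋ = ⌊x * (b : ℝ) ^ m⌋ then 1 else 0

lemma chi_eq {b : ℕ} (hb : 2 ≤ b) (m : ℕ) {x y : ℝ} (hx : x ∈ Set.Ico (0 : ℝ) 1)
    (hy : y ∈ Set.Ico (0 : ℝ) 1) :
    (chi b m x y : ℂ) = ∑ k ∈ Finset.range (b ^ m),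
      (((b : ℂ) ^ m)⁻¹ * (starRingEnd ℂ) (wal1 b k x)) * wal1 b k y := by
  have hb0' : (b : ℂ) ^ m ≠ 0 := by norm_cast; positivity
  have h : ∀ k, (((b : ℂ) ^ m)⁻¹ * (starRingEnd ℂ) (wal1 b k x)) * wal1 b k y =
    ((b : ℂ) ^ m)⁻¹ * (wal1 b k y * (starRingEnd ℂ) (wal1 b k x)) := by intro k; ring
  simp_rw [h]
  rw [← Finset.mul_sum, kernel hb m hy hx, chi]
  split_ifs <;> simp [hb0']

lemma chi_coeff {b : ℕ} (hb : 2 ≤ b) (m : ℕ) {x : ℝ} (hx : x ∈ Set.Ico (0 : ℝ) 1) (k : ℕ) :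
    ∫ y in Set.Ico (0 : ℝ) 1, (chi b m x y : ℂ) * (starRingEnd ℂ) (wal1 b k y) =
      if k < b ^ m then ((b : ℂ) ^ m)⁻¹ * (starRingEnd ℂ) (wal1 b k x) else 0 := by
  have h1 : ∫ y in Set.Ico (0 : ℝ) 1, (chi b m x y : ℂ) * (starRingEnd ℂ) (wal1 b k y) =
      ∫ y in Set.Ico (0 : ℝ) 1, ∑ l ∈ Finset.range (b ^ m),
        (((b : ℂ) ^ m)⁻¹ * (starRingEnd ℂ) (wal1 b l x)) *
          (wal1 b l y * (starRingEnd ℂ) (wal1 b k y)) := by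
    apply setIntegral_congr_fun measurableSet_Ico
    intro y hy
    simp only [chi_eq hb m hx hy, Finset.sum_mul]
    apply Finset.sum_congr rfl
    intros; ring
  rw [h1, integral_finsetSum]
  · simp_rw [integral_const_mul, ortho hb _ _ _ le_rfl]
    simp
  · intro l _
    apply Integrable.const_mul
    exact ((wal_li hb k l).integrableOn_isCompact isCompact_Icc).mono_set Set.Ico_subset_Icc_self

def ff (b m : ℕ) {s : ℕ} (x : Fin s → ℝ) (t : ℝ) (y : Fin s → ℝ) : ℝ :=
  t * ∏ j, chi b m (x j) (y j)

def co (b m : ℕ) {s : ℕ} (x : Fin s → ℝ) (k : Fin s → ℕ) : ℂ :=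
  ∏ j, if k j < b ^ m then ((b : ℂ) ^ m)⁻¹ * (starRingEnd ℂ) (wal1 b (k j) (x j)) else 0

lemma ff_coeff {b : ℕ} (hb : 2 ≤ b) (m : ℕ) {s : ℕ} {x : Fin s → ℝ} (hx : x ∈ unitCube s) (t : ℝ)
    (k : Fin s → ℕ) : walshCoeff b (ff b m x t) k = t * co b m x k := by
  have hx' : ∀ j, x j ∈ Set.Ico (0 : ℝ) 1 := fun j => hx j trivial
  unfold walshCoeff unitCube
  have h1 : ∀ y : Fin s → ℝ, ((ff b m x t y : ℝ) : ℂ) * (starRingEnd ℂ) (wal b k y) =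
      t * ∏ j, ((chi b m (x j) (y j) : ℂ) * (starRingEnd ℂ) (wal1 b (k j) (y j))) := by
    intro y
    simp only [ff, wal, map_prod, Finset.prod_mul_distrib]
    push_cast
    ring
  simp_rw [h1]
  rw [integral_const_mul, volume_pi, Measure.restrict_pi_pi,
    integral_fintype_prod_eq_prod (fun (j : Fin s) (y : ℝ) =>
      (chi b m (x j) y : ℂ) * (starRingEnd ℂ) (wal1 b (k j) y))]
  simp_rw [chi_coeff hb m (hx' _)]
  rfl

lemma co_zero {b m s : ℕ} {x : Fin s → ℝ} {k : Fin s → ℕ} (h : ¬ ∀ j, k j < b ^ m) :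
    co b m x k = 0 := by
  push Not at h
  obtain ⟨j, hj⟩ := h
  exact Finset.prod_eq_zero (Finset.mem_univ j) (if_neg (by omega))

lemma co_norm {b m s : ℕ} (hb : 2 ≤ b) {x : Fin s → ℝ} {k : Fin s → ℕ} (h : ∀ j, k j < b ^ m) :
    ‖co b m x k‖ = (((b : ℝ) ^ m)⁻¹) ^ s := by
  simp [co, h, wal1_norm hb]

lemma ff_hasSum {b : ℕ} (hb : 2 ≤ b) (m : ℕ) {s : ℕ} {x : Fin s → ℝ} (hx : x ∈ unitCube s) (t : ℝ)
    {y : Fin s → ℝ} (hy : y ∈ unitCube s) :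
    HasSum (fun k : Fin s → ℕ => walshCoeff b (ff b m x t) k * wal b k y)
      ((ff b m x t y : ℝ) : ℂ) := by
  have hx' : ∀ j, x j ∈ Set.Ico (0 : ℝ) 1 := fun j => hx j trivial
  have hy' : ∀ j, y j ∈ Set.Ico (0 : ℝ) 1 := fun j => hy j trivial
  have h : ((ff b m x t y : ℝ) : ℂ) =
      ∑ k ∈ Fintype.piFinset (fun _ : Fin s => Finset.range (b ^ m)),
        walshCoeff b (ff b m x t) k * wal b k y := by
    simp only [ff]
    push_cast
    simp_rw [chi_eq hb m (hx' _) (hy' _)]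
    rw [Finset.prod_univ_sum, Finset.mul_sum]
    apply Finset.sum_congr rfl
    intro k hk
    have hk' : ∀ j, k j < b ^ m := by simpa using hk
    rw [ff_coeff hb m hx]
    simp only [co, hk', if_true, wal, Finset.prod_mul_distrib]
    ring
  rw [h]
  apply hasSum_sum_of_ne_finset_zero
  intro k hk
  rw [ff_coeff hb m hx, co_zero (by simpa using hk)]
  simp

def W (M m : ℕ) : ℝ := ∑ i ∈ Finset.range m, ((i : ℝ) + 1 + M)

lemma dickWt_le {b : ℕ} (hb : 2 ≤ b) {a : ℝ} {M m k : ℕ} (haM : a ≤ M) (hk : k < b ^ m) :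
    dickWt b a k ≤ W M m := by
  unfold dickWt W
  calc _ ≤ ∑ i ∈ Finset.range k, if natDigit b k i ≠ 0 then ((i : ℝ) + 1 + M) else 0 := by
        apply Finset.sum_le_sum
        intro i _
        split_ifs <;> linarith
    _ = ∑ i ∈ (Finset.range k).filter (fun i => natDigit b k i ≠ 0), ((i : ℝ) + 1 + M) := by
        rw [Finset.sum_filter]
    _ ≤ _ := by
        apply Finset.sum_le_sum_of_subset_of_nonneg
        · intro i hi
          rw [Finset.mem_filter] at hi
          rw [Finset.mem_range]
          by_contra hmi
          exact hi.2 (natDigit_eq_zero hb (lt_of_lt_of_le hk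
            (Nat.pow_le_pow_right (by omega) (by omega))))
        · intros; positivity

lemma W_le (M m : ℕ) : W M m ≤ m * (m + M) := by
  unfold W
  calc _ ≤ ∑ i ∈ Finset.range m, ((m : ℝ) + M) := by
        apply Finset.sum_le_sum
        intro i hi
        have : ((i + 1 : ℕ) : ℝ) ≤ m := by
          exact_mod_cast (Finset.mem_range.1 hi)
        push_cast at this
        linarith
    _ = _ := by simp; ring

/-- amplitude -/
def amp (b M m s : ℕ) : ℝ := ((b : ℝ) ^ m) ^ s * (b : ℝ) ^ (-((s : ℝ) * W M m))

lemma ff_bound {b : ℕ} (hb : 2 ≤ b) {M m s : ℕ} {x : Fin s → ℝ} (hx : x ∈ unitCube s) {t : ℝ}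
    (ht : |t| ≤ amp b M m s) {a : Fin s → ℝ} (ha : ∀ j, a j ≤ M) (k : Fin s → ℕ) :
    ‖walshCoeff b (ff b m x t) k‖ * (b : ℝ) ^ dickWtV b a k ≤ 1 := by
  have hb0 : (0 : ℝ) < b := by positivity
  rw [ff_coeff hb m hx]
  by_cases h : ∀ j, k j < b ^ m
  · rw [norm_mul, co_norm hb h, Complex.norm_real, Real.norm_eq_abs]
    have hw : dickWtV b a k ≤ s * W M m := by
      unfold dickWtV
      calc _ ≤ ∑ j : Fin s, W M m := Finset.sum_le_sum fun j _ => dickWt_le hb (ha j) (h j)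
        _ = _ := by simp
    calc _ ≤ amp b M m s * (((b : ℝ) ^ m)⁻¹) ^ s * (b : ℝ) ^ ((s : ℝ) * W M m) := by
          have hb1 : (1 : ℝ) ≤ b := by exact_mod_cast (by omega : 1 ≤ b)
          have hamp : 0 ≤ amp b M m s := by unfold amp; positivity
          gcongr
      _ = 1 := by
          rw [amp, Real.rpow_neg hb0.le]
          have := Real.rpow_pos_of_pos hb0 ((s : ℝ) * W M m)
          have h3 : ((b : ℝ) ^ m) ^ s * (((b : ℝ) ^ m)⁻¹) ^ s = 1 := by
            rw [← mul_pow, mul_inv_cancel₀ (by positivity), one_pow]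
          rw [mul_right_comm _ _ ((((b : ℝ) ^ m)⁻¹) ^ s), h3, one_mul, mul_comm, mul_inv_cancel₀ this.ne']
  · rw [co_zero h]; simp

lemma ff_int {b : ℕ} (hb : 2 ≤ b) (m : ℕ) {s : ℕ} {x : Fin s → ℝ} (hx : x ∈ unitCube s) (t : ℝ) :
    intBox s (ff b m x t) = t * (((b : ℝ) ^ m)⁻¹) ^ s := by
  have hb0 : 0 < b := by omega
  have h := ff_coeff hb m hx t (fun _ => 0)
  simp only [walshCoeff, wal, co, wal1_zero, Finset.prod_const_one, map_one, mul_one,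
    pow_pos hb0, if_true, Finset.prod_const, Finset.card_univ, Fintype.card_fin] at h
  rw [integral_complex_ofReal] at h
  unfold intBox
  apply Complex.ofReal_injective
  rw [h]
  push_cast
  rfl

lemma exists_box {b : ℕ} (hb : 2 ≤ b) {m s n : ℕ} (hn : n < (b ^ m) ^ s) (t : Fin n → Fin s → ℝ)
    (ht : ∀ i, t i ∈ unitCube s) :
    ∃ x ∈ unitCube s, ∀ r i, ff b m x r (t i) = 0 := by
  have hb0 : (0 : ℝ) < (b : ℝ) ^ m := by positivity
  let g : Fin n → (Fin s → Fin (b ^ m)) := fun i j =>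
    ⟨⌊t i j * (b : ℝ) ^ m⌋.toNat, by
      have := floor_range hb m (ht i j trivial)
      zify; rw [Int.toNat_of_nonneg this.1]; exact this.2⟩
  have hg : ¬ Function.Surjective g := by
    intro hs
    have := Fintype.card_le_of_surjective g hs
    simp at this
    omega
  rw [Function.Surjective] at hg
  push Not at hg
  obtain ⟨e, he⟩ := hg
  refine ⟨fun j => (e j : ℕ) / (b : ℝ) ^ m, ?_, ?_⟩
  · intro j _
    refine ⟨by positivity, ?_⟩
    simp only
    rw [div_lt_one hb0]
    exact_mod_cast (e j).2
  · intro r i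
    obtain ⟨j, hj⟩ := Function.ne_iff.1 (he i)
    rw [ff, Finset.prod_eq_zero (Finset.mem_univ j), mul_zero]
    rw [chi, if_neg]
    intro h
    rw [div_mul_cancel₀ _ hb0.ne', Int.floor_natCast] at h
    apply hj
    apply Fin.ext
    simp [g, h]

lemma lower {b : ℕ} (hb : 2 ≤ b) {M m s n : ℕ} (hn : n < (b ^ m) ^ s) {a : Fin s → ℝ}
    (ha : ∀ j, a j ≤ M) :
    ENNReal.ofReal ((b : ℝ) ^ (-((s : ℝ) * W M m))) ≤
      minErr n s {f | MemW b a f} (normW b a) := by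
  have hb0 : (0 : ℝ) < b := by positivity
  unfold minErr
  refine le_iInf fun t => le_iInf fun ht => le_iInf fun φ => ?_
  obtain ⟨x, hx, h0⟩ := exists_box hb hn t ht
  set v := (b : ℝ) ^ (-((s : ℝ) * W M m)) with hv
  have hvp : 0 < v := Real.rpow_pos_of_pos hb0 _
  have hamp : 0 < amp b M m s := by unfold amp; positivity
  have key : ∀ r : ℝ, |r| ≤ amp b M m s →
      ENNReal.ofReal |r * (((b : ℝ) ^ m)⁻¹) ^ s - φ (fun _ => 0)| ≤
        worstErr s {f | MemW b a f} (normW b a) fun f => φ fun i => f (t i) := by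
    intro r hr
    have hbd := ff_bound hb hx hr ha
    have hmem : ff b m x r ∈ {f | MemW b a f} := by
      refine ⟨fun y hy => ff_hasSum hb m hx r hy, 1, ?_⟩
      rintro _ ⟨k, rfl⟩
      exact hbd k
    have hnorm : normW b a (ff b m x r) ≤ 1 := ciSup_le hbd
    unfold worstErr
    refine le_trans (le_of_eq ?_) (le_iSup_of_le (ff b m x r) (le_iSup_of_le hmem
      (le_iSup_of_le hnorm le_rfl)))
    rw [ff_int hb m hx]
    simp only [h0]
  have hav : amp b M m s * (((b : ℝ) ^ m)⁻¹) ^ s = v := by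
    rw [amp, ← hv, mul_right_comm, ← mul_pow, mul_inv_cancel₀ (by positivity), one_pow, one_mul]
  rcases le_total (φ fun _ => 0) 0 with hφ | hφ
  · refine le_trans (ENNReal.ofReal_le_ofReal ?_) (key (amp b M m s) (by rw [abs_of_pos hamp]))
    rw [hav]
    exact le_trans (by linarith) (le_abs_self _)
  · refine le_trans (ENNReal.ofReal_le_ofReal ?_)
      (key (-amp b M m s) (by rw [abs_neg, abs_of_pos hamp]))
    rw [neg_mul, hav]
    exact le_trans (by linarith) (neg_le_abs _)

end WalshLB

/-- there are no constants `A, C, c > 0` such that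
`e(n, s, W_{s,a}) ≤ C·exp(A·s)·exp(-c·(log n)²)` for all `s, n ∈ ℕ`. -/
theorem statement1 (b : ℕ) (hb : 2 ≤ b) (a : ℕ → ℝ) (ha : Monotone a) :
    ¬ ∃ A C c : ℝ, 0 < A ∧ 0 < C ∧ 0 < c ∧
        ∀ s n : ℕ, 0 < s → 0 < n →
          minErr n s {f | MemW b (fun j : Fin s => a j) f} (normW b (fun j : Fin s => a j)) ≤
            ENNReal.ofReal (C * Real.exp (A * s) * Real.exp (-c * (Real.log n) ^ 2)) := by
  rintro ⟨A, C, c, hA, hC, hc, H⟩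
  have hb1 : (1 : ℝ) < b := by exact_mod_cast (by omega : 1 < b)
  have hb0 : (0 : ℝ) < b := by linarith
  set L := Real.log b with hL
  have hLp : 0 < L := Real.log_pos hb1
  obtain ⟨s, hs⟩ := exists_nat_ge (2 / (c * L))
  have hcs : 2 ≤ c * L * s := by
    rw [div_le_iff₀ (by positivity)] at hs; linarith
  have hsp : 0 < s := by
    rcases Nat.eq_zero_or_pos s with h | h
    · subst h; norm_num at hcs
    · exact h
  have hs1 : (0 : ℝ) < s := by exact_mod_cast hsp
  obtain ⟨M, hM⟩ := exists_nat_ge (a s)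
  have haM : ∀ j : Fin s, a j ≤ M := fun j => (ha j.2.le).trans hM
  set Q := (A * s + Real.log C) / (s * L) with hQ
  obtain ⟨m, hm⟩ := exists_nat_ge ((M : ℝ) + 3 + |Q|)
  have hn : b ^ (m * s) < (b ^ (m + 1)) ^ s := by
    rw [← pow_mul]
    exact Nat.pow_lt_pow_right (by omega) (by nlinarith)
  have h1 := (WalshLB.lower hb hn haM).trans (H s (b ^ (m * s)) hsp (by positivity))
  rw [ENNReal.ofReal_le_ofReal_iff (by positivity)] at h1
  have h2 := Real.log_le_log (by positivity) h1
  rw [Real.log_rpow hb0, Real.log_mul (by positivity) (by positivity),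
    Real.log_mul (by positivity) (by positivity), Real.log_exp, Real.log_exp] at h2
  push_cast at h2
  rw [Real.log_pow] at h2
  push_cast at h2
  rw [← hL] at h2
  have hW := WalshLB.W_le M (m + 1)
  push_cast at hW
  have hQ' : A * s + Real.log C = Q * (s * L) := by rw [hQ]; field_simp
  have hQa := le_abs_self Q
  have hQ0 := abs_nonneg Q
  have hM0 : (0 : ℝ) ≤ M := by positivity
  have hm0 : (0 : ℝ) ≤ m := by positivity
  have e1 : s * L * (2 * (m : ℝ) ^ 2) ≤ c * (m * s * L) ^ 2 := by
    have : c * (m * s * L) ^ 2 = s * L * ((c * L * s) * (m : ℝ) ^ 2) := by ring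
    rw [this]; gcongr
  have e2 : s * L * WalshLB.W M (m + 1) ≤ s * L * ((m + 1) * (m + 1 + M)) := by gcongr
  have e3 : s * L * (2 * (m : ℝ) ^ 2) ≤ s * L * (Q + (m + 1) * (m + 1 + M)) := by
    linarith
  have e4 := le_of_mul_le_mul_left e3 (by positivity)
  nlinarith [mul_nonneg hm0 hQ0, mul_nonneg hm0 (sub_nonneg.2 hm)]

end
end
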